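/- For every alphabet 𝒜 with δ_𝒜 > 1 − 1/6 = 5/6, there exist a constant c > 0 and N₀ such that for every integer N ≥ N₀ one has #𝔇_𝒜(N) ≥ c·N. -/

import Mathlib

open Real Filter

noncomputable section

/-- The continuant `⟨d₁,…,d_k⟩`, with `⟨⟩ = 1`, satisfying
`⟨d₁,…,d_k⟩ = d₁·⟨d₂,…,d_k⟩ + ⟨d₃,…,d_k⟩`. -/
def cont : List ℕ → ℕ
  | [] => 1
  | [d] => d
  | d :: e :: l => d * cont (e :: l) + cont l

/-- The value of the finite continued fraction `[d₁,…,d_k] = ⟨d₂,…,d_k⟩ / ⟨d₁,…,d_k⟩`. -/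
def cfVal (l : List ℕ) : ℝ := (cont l.tail : ℝ) / (cont l : ℝ)

/-- The set `E_𝒜` of values of infinite continued fractions `[0; d₁, d₂, …]`
with all partial quotients in `𝒜`. -/
def cfSet (A : Finset ℕ) : Set ℝ :=
  {x | ∃ d : ℕ → ℕ, (∀ i, d i ∈ A) ∧
    Tendsto (fun k => cfVal ((List.range k).map d)) atTop (nhds x)}

/-- `δ_𝒜`, the Hausdorff dimension of `E_𝒜` (as a real number). -/
def hdim (A : Finset ℕ) : ℝ := (dimH (cfSet A)).toReal

/-- `𝔇_𝒜(N)`: the set of positive integers `d ≤ N` representable as a continuant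
of a finite sequence with entries in `𝒜`. -/
def DD (A : Finset ℕ) (N : ℕ) : Set ℕ :=
  {d | 0 < d ∧ d ≤ N ∧ ∃ l : List ℕ, l ≠ [] ∧ (∀ x ∈ l, x ∈ A) ∧ cont l = d}

lemma wjensen {ι : Type*} (s : Finset ι) (p : ι → ℝ) (hp : ∀ i ∈ s, 0 ≤ p i)
    (h1 : ∑ i ∈ s, p i ≤ 1) (f : ι → ℂ) :
    ‖∑ i ∈ s, (p i : ℂ) * f i‖ ^ 2 ≤ ∑ i ∈ s, p i * ‖f i‖ ^ 2 := by
  have h2 : ‖∑ i ∈ s, (p i : ℂ) * f i‖ ≤ ∑ i ∈ s, p i * ‖f i‖ := by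
    refine (norm_sum_le _ _).trans (Finset.sum_le_sum fun i hi => ?_)
    rw [norm_mul, Complex.norm_real, Real.norm_of_nonneg (hp i hi)]
  have h3 : (∑ i ∈ s, p i * ‖f i‖) ^ 2 ≤ (∑ i ∈ s, p i) * ∑ i ∈ s, p i * ‖f i‖ ^ 2 := by
    refine Finset.sum_sq_le_sum_mul_sum_of_sq_le_mul s hp (fun i hi => ?_) (fun i hi => le_of_eq (by ring))
    have := hp i hi; positivity
  have h4 : 0 ≤ ∑ i ∈ s, p i * ‖f i‖ ^ 2 :=
    Finset.sum_nonneg fun i hi => by have := hp i hi; positivity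
  calc _ ≤ (∑ i ∈ s, p i * ‖f i‖) ^ 2 := by gcongr
    _ ≤ _ := h3
    _ ≤ 1 * _ := by gcongr
    _ = _ := one_mul _

lemma parseval2 {P : ℕ} [NeZero P] {X : Type*} [Fintype X] (a b : X → ℕ)
    (hinj : Function.Injective fun x => (a x, b x))
    (ha : ∀ x, a x < P) (hb : ∀ x, b x < P) (f : X → ℂ) :
    ∑ z : ZMod P × ZMod P,
      ‖∑ x, f x * ZMod.stdAddChar ((a x : ZMod P) * z.1 + (b x : ZMod P) * z.2)‖ ^ 2
      = (P : ℝ) ^ 2 * ∑ x, ‖f x‖ ^ 2 := by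
  classical
  have key : ((∑ z : ZMod P × ZMod P,
      ‖∑ x, f x * ZMod.stdAddChar ((a x : ZMod P) * z.1 + (b x : ZMod P) * z.2)‖ ^ 2 : ℝ) : ℂ)
      = (((P : ℝ) ^ 2 * ∑ x, ‖f x‖ ^ 2 : ℝ) : ℂ) := by
    push_cast
    have e1 : ∀ z : ZMod P × ZMod P,
        ((‖∑ x, f x * ZMod.stdAddChar ((a x : ZMod P) * z.1 + (b x : ZMod P) * z.2)‖ : ℂ)) ^ 2
        = ∑ x, ∑ y, f x * (starRingEnd ℂ) (f y) *
          (ZMod.stdAddChar (z.1 * ((a x : ZMod P) - (a y : ZMod P))) *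
            ZMod.stdAddChar (z.2 * ((b x : ZMod P) - (b y : ZMod P)))) := by
      intro z
      rw [← Complex.mul_conj', map_sum, Finset.sum_mul_sum]
      refine Finset.sum_congr rfl fun x _ => Finset.sum_congr rfl fun y _ => ?_
      rw [map_mul, ← AddChar.map_neg_eq_conj, ← AddChar.map_add_eq_mul]
      rw [mul_mul_mul_comm, ← AddChar.map_add_eq_mul]
      congr 2
      ring
    simp_rw [e1]
    rw [Finset.sum_comm]
    rw [Finset.mul_sum]
    refine Finset.sum_congr rfl fun x _ => ?_
    rw [Finset.sum_comm]
    rw [Finset.sum_eq_single x]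
    · rw [← Finset.mul_sum, Fintype.sum_prod_type]
      simp [ZMod.card]
      rw [Complex.mul_conj']
      ring
    · intro y _ hy
      rw [← Finset.mul_sum, Fintype.sum_prod_type]
      simp_rw [← Finset.mul_sum]
      rw [← Finset.sum_mul]
      rw [AddChar.sum_mulShift _ (ZMod.isPrimitive_stdAddChar P),
        AddChar.sum_mulShift _ (ZMod.isPrimitive_stdAddChar P)]
      by_cases h1 : (a x : ZMod P) - a y = 0
      · by_cases h2 : (b x : ZMod P) - b y = 0
        · exfalso
          apply hy
          apply hinj
          rw [sub_eq_zero, ZMod.natCast_eq_natCast_iff'] at h1 h2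
          rw [Nat.mod_eq_of_lt (ha x), Nat.mod_eq_of_lt (ha y)] at h1
          rw [Nat.mod_eq_of_lt (hb x), Nat.mod_eq_of_lt (hb y)] at h2
          simp [h1, h2]
        · simp [h2]
      · simp [h1]
    · simp
  exact_mod_cast key

lemma re_stdAddChar_ge {P : ℕ} [NeZero P] (a : ℕ) (t : ℤ) (M : ℝ) (ha : (a : ℝ) ≤ M)
    (ht : |(t : ℝ)| * (10 * M) ≤ P) :
    (1 / 2 : ℝ) ≤ (ZMod.stdAddChar ((a : ZMod P) * (t : ZMod P)) : ℂ).re := by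
  have hP : (0 : ℝ) < P := by exact_mod_cast Nat.pos_of_ne_zero (NeZero.ne P)
  have e : ((a : ZMod P) * (t : ZMod P)) = (((a : ℤ) * t : ℤ) : ZMod P) := by push_cast; ring
  rw [e, ZMod.stdAddChar_coe]
  have e2 : (2 * (Real.pi : ℂ) * Complex.I * (((a : ℤ) * t : ℤ) : ℂ) / (P : ℂ))
      = ((2 * Real.pi * (a * t / P) : ℝ) : ℂ) * Complex.I := by push_cast; ring
  rw [e2, Complex.exp_ofReal_mul_I_re, ← Real.cos_abs, ← Real.cos_pi_div_three]
  have h1 : |(a : ℝ) * t / P| ≤ 1 / 10 := by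
    rw [abs_div, abs_mul, abs_of_pos hP, div_le_iff₀ hP, abs_of_nonneg (Nat.cast_nonneg a)]
    nlinarith [abs_nonneg (t : ℝ)]
  have h2 : |2 * Real.pi * (a * t / P)| ≤ Real.pi / 3 := by
    rw [abs_mul, abs_of_pos (by positivity)]
    nlinarith [Real.pi_pos]
  exact Real.cos_le_cos_of_nonneg_of_le_pi (abs_nonneg _) (by linarith [Real.pi_pos]) h2

/-- two-dimensional large sieve -/
lemma large_sieve {P : ℕ} [NeZero P] {X I : Type*} [Fintype X] [Fintype I] (a b : X → ℕ)
    (hinj : Function.Injective fun x => (a x, b x))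
    (ha : ∀ x, a x < P) (hb : ∀ x, b x < P)
    (M : ℝ) (hM : 1 ≤ M) (haM : ∀ x, (a x : ℝ) ≤ M) (hbM : ∀ x, (b x : ℝ) ≤ M)
    (w : X → ℝ) (hw : ∀ x, 0 ≤ w x) (hw1 : ∑ x, w x ≤ 1) (μ : ℝ) (hμ : ∀ x, w x ≤ μ)
    (hμ0 : 0 ≤ μ)
    (c : I → ℝ) (hc : ∀ i, 0 ≤ c i) (u v : I → ZMod P) (κ : ℝ)
    (hκ : ∀ z : ZMod P × ZMod P, ∀ s : Finset I,
      (∀ i ∈ s, (∃ t : ℤ, |(t : ℝ)| * (10 * M) ≤ P ∧ u i + t = z.1) ∧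
        (∃ t : ℤ, |(t : ℝ)| * (10 * M) ≤ P ∧ v i + t = z.2)) → ∑ i ∈ s, c i ≤ κ) :
    ∑ i, c i * ‖∑ x, (w x : ℂ) *
      ZMod.stdAddChar ((a x : ZMod P) * u i + (b x : ZMod P) * v i)‖ ^ 2
      ≤ 1600 * M ^ 2 * μ * κ := by
  classical
  have hP : (0 : ℝ) < P := by exact_mod_cast Nat.pos_of_ne_zero (NeZero.ne P)
  set T : ℕ := ⌊(P : ℝ) / (10 * M)⌋₊ with hT
  have hT1 : (T : ℝ) * (10 * M) ≤ P := by
    have := Nat.floor_le (show 0 ≤ (P : ℝ) / (10 * M) by positivity)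
    rwa [le_div_iff₀ (by positivity)] at this
  have hT2 : (P : ℝ) < (T + 1) * (10 * M) := by
    have := Nat.lt_floor_add_one ((P : ℝ) / (10 * M))
    rwa [div_lt_iff₀ (by positivity)] at this
  set B : Finset ℤ := Finset.Icc (-(T : ℤ)) T with hB
  have hBt : ∀ t ∈ B, |(t : ℝ)| * (10 * M) ≤ P := by
    intro t ht
    rw [hB, Finset.mem_Icc] at ht
    have h1 : |(t : ℝ)| ≤ T := by
      rw [abs_le]; constructor <;> [exact_mod_cast ht.1; exact_mod_cast ht.2]
    refine le_trans ?_ hT1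
    gcongr
  have hcard : (B.card : ℝ) = 2 * T + 1 := by
    rw [hB, Int.card_Icc]
    have : ((T : ℤ) + 1 - -(T : ℤ)).toNat = 2 * T + 1 := by omega
    rw [this]; push_cast; ring
  set b0 : ℝ := (B.card : ℝ) with hb0
  have hb0pos : 0 < b0 := by rw [hcard]; positivity
  set A : ℕ → ℂ := fun m => ∑ t ∈ B, ZMod.stdAddChar ((m : ZMod P) * (t : ZMod P)) with hA
  have hAn : ∀ m : ℕ, (m : ℝ) ≤ M → b0 / 2 ≤ ‖A m‖ := by
    intro m hm
    refine le_trans ?_ (Complex.re_le_norm _)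
    rw [hA, Complex.re_sum]
    calc b0 / 2 = ∑ t ∈ B, (1 / 2 : ℝ) := by rw [Finset.sum_const, nsmul_eq_mul]; ring
      _ ≤ _ := Finset.sum_le_sum fun t ht => re_stdAddChar_ge m t M hm (hBt t ht)
  have hA0 : ∀ m : ℕ, (m : ℝ) ≤ M → A m ≠ 0 := by
    intro m hm h
    have := hAn m hm
    rw [h, norm_zero] at this
    linarith
  set f : X → ℂ := fun x => (w x : ℂ) / (A (a x) * A (b x)) with hf
  set F : ZMod P × ZMod P → ℂ := fun z =>
    ∑ x, f x * ZMod.stdAddChar ((a x : ZMod P) * z.1 + (b x : ZMod P) * z.2) with hF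
  have hrep : ∀ i, ∑ x, (w x : ℂ) *
      ZMod.stdAddChar ((a x : ZMod P) * u i + (b x : ZMod P) * v i)
      = ∑ t ∈ B ×ˢ B, F (u i + t.1, v i + t.2) := by
    intro i
    simp only [hF]
    rw [Finset.sum_comm]
    refine Finset.sum_congr rfl fun x _ => ?_
    rw [← Finset.mul_sum, Finset.sum_product]
    have e : ∀ t s : ℤ, (ZMod.stdAddChar ((a x : ZMod P) * (u i + (t : ZMod P)) + (b x : ZMod P) * (v i + (s : ZMod P))) : ℂ)
        = ZMod.stdAddChar ((a x : ZMod P) * u i + (b x : ZMod P) * v i) *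
          (ZMod.stdAddChar ((a x : ZMod P) * (t : ZMod P)) *
            ZMod.stdAddChar ((b x : ZMod P) * (s : ZMod P))) := by
      intro t s
      rw [← AddChar.map_add_eq_mul, ← AddChar.map_add_eq_mul]
      congr 1; ring
    simp_rw [e, ← Finset.mul_sum]
    rw [← Finset.sum_mul]
    have h1 := hA0 _ (haM x)
    have h2 := hA0 _ (hbM x)
    change _ = (w x : ℂ) / (A (a x) * A (b x)) * (_ * (A (a x) * A (b x)))
    field_simp
  have hFP : ∑ z, ‖F z‖ ^ 2 ≤ (P : ℝ) ^ 2 * (16 * μ / b0 ^ 4) := by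
    rw [hF, parseval2 a b hinj ha hb f]
    gcongr
    have : ∀ x, ‖f x‖ ^ 2 ≤ w x * (16 * μ / b0 ^ 4) := by
      intro x
      have h1 := hAn _ (haM x)
      have h2 := hAn _ (hbM x)
      have h3 : b0 ^ 2 / 4 ≤ ‖A (a x)‖ * ‖A (b x)‖ := by nlinarith
      have h4 : ‖f x‖ ≤ w x * (4 / b0 ^ 2) := by
        rw [hf]
        simp only [norm_div, norm_mul, Complex.norm_real, Real.norm_of_nonneg (hw x)]
        rw [div_le_iff₀ (by nlinarith [sq_pos_of_pos hb0pos])]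
        calc w x = w x * (4 / b0 ^ 2) * (b0 ^ 2 / 4) := by field_simp
          _ ≤ _ := by gcongr; exact mul_nonneg (hw x) (by positivity)
      calc ‖f x‖ ^ 2 ≤ (w x * (4 / b0 ^ 2)) ^ 2 := by gcongr
        _ = w x * (w x * (16 / b0 ^ 4)) := by ring
        _ ≤ w x * (μ * (16 / b0 ^ 4)) := by gcongr; exact hw x; exact hμ x
        _ = _ := by ring
    calc _ ≤ ∑ x, w x * (16 * μ / b0 ^ 4) := Finset.sum_le_sum fun x _ => this x
      _ = (∑ x, w x) * (16 * μ / b0 ^ 4) := by rw [Finset.sum_mul]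
      _ ≤ 1 * (16 * μ / b0 ^ 4) := by gcongr
      _ = _ := one_mul _
  have hκ0 : 0 ≤ κ := by simpa using hκ (0, 0) ∅ (by simp)
  have hTP : 2 * (T : ℝ) < P := by nlinarith
  have hBinj : ∀ t ∈ B, ∀ s ∈ B, (t : ZMod P) = s → t = s := by
    intro t ht s hs h
    rw [hB, Finset.mem_Icc] at ht hs
    rw [ZMod.intCast_eq_intCast_iff_dvd_sub] at h
    have h2 : 2 * (T : ℤ) < P := by exact_mod_cast hTP
    have := Int.eq_zero_of_abs_lt_dvd h (by rw [abs_lt]; constructor <;> omega)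
    omega
  have main : ∑ i, c i * ∑ t ∈ B ×ˢ B, ‖F (u i + t.1, v i + t.2)‖ ^ 2 ≤ κ * ∑ z, ‖F z‖ ^ 2 := by
    have e1 : ∀ i, ∑ t ∈ B ×ˢ B, ‖F (u i + t.1, v i + t.2)‖ ^ 2
        ≤ ∑ z, if ((∃ t ∈ B, u i + t = z.1) ∧ (∃ t ∈ B, v i + t = z.2)) then ‖F z‖ ^ 2 else 0 := by
      intro i
      rw [← Finset.sum_filter]
      have hinj2 : Set.InjOn (fun t : ℤ × ℤ => ((u i + t.1, v i + t.2) : ZMod P × ZMod P))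
          (B ×ˢ B : Finset (ℤ × ℤ)) := by
        intro t ht s hs h
        simp only [Finset.coe_product, Set.mem_prod, Finset.mem_coe] at ht hs
        simp only [Prod.mk.injEq, add_right_inj] at h
        exact Prod.ext (hBinj _ ht.1 _ hs.1 h.1) (hBinj _ ht.2 _ hs.2 h.2)
      rw [← Finset.sum_image (f := fun z => ‖F z‖ ^ 2) hinj2]
      refine Finset.sum_le_sum_of_subset_of_nonneg ?_ (fun _ _ _ => by positivity)
      intro z hz
      rw [Finset.mem_image] at hz
      obtain ⟨t, ht, rfl⟩ := hz
      rw [Finset.mem_product] at ht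
      simp only [Finset.mem_filter, Finset.mem_univ, true_and]
      exact ⟨⟨_, ht.1, rfl⟩, ⟨_, ht.2, rfl⟩⟩
    calc _ ≤ ∑ i, c i * ∑ z, if ((∃ t ∈ B, u i + t = z.1) ∧ (∃ t ∈ B, v i + t = z.2))
              then ‖F z‖ ^ 2 else 0 :=
            Finset.sum_le_sum fun i _ => mul_le_mul_of_nonneg_left (e1 i) (hc i)
      _ = ∑ z, (∑ i with ((∃ t ∈ B, u i + t = z.1) ∧ (∃ t ∈ B, v i + t = z.2)), c i)
            * ‖F z‖ ^ 2 := by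
          simp_rw [Finset.mul_sum]
          rw [Finset.sum_comm]
          refine Finset.sum_congr rfl fun z _ => ?_
          rw [Finset.sum_mul, Finset.sum_filter]
          refine Finset.sum_congr rfl fun i _ => ?_
          split_ifs <;> simp
      _ ≤ ∑ z, κ * ‖F z‖ ^ 2 := by
          refine Finset.sum_le_sum fun z _ => mul_le_mul_of_nonneg_right ?_ (by positivity)
          apply hκ z
          intro i hi
          simp only [Finset.mem_filter, Finset.mem_univ, true_and] at hi
          obtain ⟨⟨t, ht, h⟩, ⟨s, hs, h'⟩⟩ := hi
          exact ⟨⟨t, hBt t ht, h⟩, ⟨s, hBt s hs, h'⟩⟩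
      _ = _ := by rw [Finset.mul_sum]
  have hcs : ∀ i, ‖∑ t ∈ B ×ˢ B, F (u i + t.1, v i + t.2)‖ ^ 2
      ≤ b0 ^ 2 * ∑ t ∈ B ×ˢ B, ‖F (u i + t.1, v i + t.2)‖ ^ 2 := by
    intro i
    calc _ ≤ (∑ t ∈ B ×ˢ B, ‖F (u i + t.1, v i + t.2)‖) ^ 2 := by
            gcongr; exact norm_sum_le _ _
      _ ≤ ((B ×ˢ B).card : ℝ) * ∑ t ∈ B ×ˢ B, ‖F (u i + t.1, v i + t.2)‖ ^ 2 :=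
            sq_sum_le_card_mul_sum_sq
      _ = _ := by rw [Finset.card_product]; push_cast; ring
  have hbM : (P : ℝ) ≤ b0 * (10 * M) := by rw [hcard]; nlinarith
  calc _ = ∑ i, c i * ‖∑ t ∈ B ×ˢ B, F (u i + t.1, v i + t.2)‖ ^ 2 := by simp_rw [hrep]
    _ ≤ ∑ i, c i * (b0 ^ 2 * ∑ t ∈ B ×ˢ B, ‖F (u i + t.1, v i + t.2)‖ ^ 2) :=
        Finset.sum_le_sum fun i _ => mul_le_mul_of_nonneg_left (hcs i) (hc i)
    _ = b0 ^ 2 * ∑ i, c i * ∑ t ∈ B ×ˢ B, ‖F (u i + t.1, v i + t.2)‖ ^ 2 := by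
        rw [Finset.mul_sum]; refine Finset.sum_congr rfl fun i _ => by ring
    _ ≤ b0 ^ 2 * (κ * ((P : ℝ) ^ 2 * (16 * μ / b0 ^ 4))) := by gcongr; exact main.trans (by gcongr)
    _ = κ * (16 * μ) * (P / b0) ^ 2 := by field_simp
    _ ≤ κ * (16 * μ) * (10 * M) ^ 2 := by
        gcongr
        rw [div_le_iff₀ hb0pos]; linarith
    _ = _ := by ring

lemma LS2 {P : ℕ} [NeZero P] {X Γ : Type} [Fintype X] [Fintype Γ] (a b : X → ℕ)
    (hinj : Function.Injective fun x => (a x, b x))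
    (ha : ∀ x, a x < P) (hb : ∀ x, b x < P)
    (M : ℝ) (hM : 1 ≤ M) (haM : ∀ x, (a x : ℝ) ≤ M) (hbM : ∀ x, (b x : ℝ) ≤ M)
    (w : X → ℝ) (hw : ∀ x, 0 ≤ w x) (hw1 : ∑ x, w x ≤ 1) (μ : ℝ) (hμ : ∀ x, w x ≤ μ)
    (hμ0 : 0 ≤ μ) (p : Γ → ℝ) (hp0 : ∀ x, 0 ≤ p x) (p0 : ℝ) (hp : ∀ x, p x ≤ p0)
    (hp00 : 0 ≤ p0) (hp1 : ∑ x, p x ≤ 1)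
    (u v : Γ → ℕ) (Θ : Finset ℕ) (hΘ : ∀ j ∈ Θ, j < P) (C0 : ℕ)
    (hclose : ∀ j ∈ Θ, ∀ j' ∈ Θ, ∀ g g', ∀ n1 n2 : ℤ,
      |(((j : ℤ) * u g - j' * u g' - P * n1 : ℤ) : ℝ)| * (5 * M) ≤ P →
      |(((j : ℤ) * v g - j' * v g' - P * n2 : ℤ) : ℝ)| * (5 * M) ≤ P →
      g = g' ∧ ∃ e l : ℤ, |e| ≤ C0 ∧ (j : ℤ) - j' = P * l + e) :
    ∑ j ∈ Θ, ‖∑ g, (p g : ℂ) * ∑ x, (w x : ℂ) *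
      ZMod.stdAddChar ((j : ZMod P) * ((a x * u g + b x * v g : ℕ) : ZMod P))‖ ^ 2
      ≤ 1600 * M ^ 2 * μ * (p0 * (2 * C0 + 1)) := by
  classical
  have key := large_sieve (P := P) (I := Θ × Γ) a b hinj ha hb M hM haM hbM w hw hw1 μ hμ hμ0
    (fun i => p i.2) (fun i => hp0 _) (fun i => (i.1.1 : ZMod P) * (u i.2 : ZMod P))
    (fun i => (i.1.1 : ZMod P) * (v i.2 : ZMod P)) (p0 * (2 * C0 + 1)) ?_
  · refine le_trans ?_ key
    rw [Fintype.sum_prod_type, ← Finset.sum_coe_sort Θ]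
    refine Finset.sum_le_sum fun j _ => ?_
    refine le_trans (wjensen _ p (fun i _ => hp0 i) hp1 _) (le_of_eq ?_)
    refine Finset.sum_congr rfl fun g _ => ?_
    congr 3
    refine Finset.sum_congr rfl fun x _ => ?_
    congr 2
    push_cast; ring
  · intro z s hs
    rcases s.eq_empty_or_nonempty with rfl | ⟨i0, hi0⟩
    · simp; positivity
    have cl : ∀ (t t' : ℤ) (x y z : ZMod P), x + t = z → y + t' = z → ∀ X Y : ℤ, (X : ZMod P) = x →
        (Y : ZMod P) = y → ∃ n : ℤ, Y - X - P * n = t - t' := by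
      intro t t' x y z h1 h2 X Y hX hY
      have : ((Y - X - (t - t') : ℤ) : ZMod P) = 0 := by
        push_cast
        rw [hX, hY, sub_eq_zero]
        have : x + t = y + t' := h1.trans h2.symm
        linear_combination -this
      rw [ZMod.intCast_zmod_eq_zero_iff_dvd] at this
      obtain ⟨n, hn⟩ := this
      exact ⟨n, by linarith⟩
    have hT : ∀ t t' : ℤ, |(t : ℝ)| * (10 * M) ≤ P → |(t' : ℝ)| * (10 * M) ≤ P →
        |((t - t' : ℤ) : ℝ)| * (5 * M) ≤ P := by
      intro t t' h1 h2
      push_cast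
      nlinarith [abs_sub (t : ℝ) t']
    have hall : ∀ i ∈ s, i.2 = i0.2 ∧ ∃ e l : ℤ, |e| ≤ C0 ∧ ((i.1.1 : ℕ) : ℤ) - (i0.1.1 : ℕ) = P * l + e := by
      intro i hi
      obtain ⟨⟨t1, ht1, h1⟩, ⟨t2, ht2, h2⟩⟩ := hs i hi
      obtain ⟨⟨s1, hs1, g1⟩, ⟨s2, hs2, g2⟩⟩ := hs i0 hi0
      obtain ⟨n1, hn1⟩ := cl s1 t1 _ _ _ g1 h1 ((i0.1.1 : ℕ) * u i0.2) ((i.1.1 : ℕ) * u i.2)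
        (by push_cast; rfl) (by push_cast; rfl)
      obtain ⟨n2, hn2⟩ := cl s2 t2 _ _ _ g2 h2 ((i0.1.1 : ℕ) * v i0.2) ((i.1.1 : ℕ) * v i.2)
        (by push_cast; rfl) (by push_cast; rfl)
      exact hclose _ i.1.2 _ i0.1.2 _ _ n1 n2 (by rw [hn1]; exact hT _ _ hs1 ht1)
        (by rw [hn2]; exact hT _ _ hs2 ht2)
    have hcard : s.card ≤ 2 * C0 + 1 := by
      have hch : ∀ i : Θ × Γ, ∃ e : ℤ, i ∈ s → |e| ≤ C0 ∧ ∃ l : ℤ, ((i.1.1 : ℕ) : ℤ) - (i0.1.1 : ℕ) = P * l + e := by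
        intro i
        by_cases hi : i ∈ s
        · obtain ⟨_, e, l, h1, h2⟩ := hall i hi
          exact ⟨e, fun _ => ⟨h1, l, h2⟩⟩
        · exact ⟨0, fun h => absurd h hi⟩
      choose e he using hch
      have : s.card ≤ (Finset.Icc (-(C0 : ℤ)) C0).card := by
        refine Finset.card_le_card_of_injOn e ?_ ?_
        · intro i hi
          rw [Finset.coe_Icc, Set.mem_Icc]
          exact abs_le.mp (he i hi).1
        · intro i hi k hk hik
          obtain ⟨_, l, hl⟩ := he i hi
          obtain ⟨_, m, hm⟩ := he k hk
          have hd : (P : ℤ) ∣ ((i.1.1 : ℕ) : ℤ) - (k.1.1 : ℕ) := ⟨l - m, by rw [hik] at hl; linarith⟩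
          have h1 := hΘ _ i.1.2
          have h2 := hΘ _ k.1.2
          have h3 := Int.eq_zero_of_abs_lt_dvd hd (by rw [abs_lt]; constructor <;> omega)
          refine Prod.ext (Subtype.ext ?_) ?_
          · omega
          · rw [(hall i hi).1, (hall k hk).1]
      rw [Int.card_Icc] at this
      omega
    calc ∑ i ∈ s, p i.2 ≤ ∑ i ∈ s, p0 := Finset.sum_le_sum fun i _ => hp _
      _ = p0 * s.card := by rw [Finset.sum_const, nsmul_eq_mul, mul_comm]
      _ ≤ p0 * (2 * C0 + 1) := by gcongr; exact_mod_cast hcard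

lemma cop_prop {y1 y2 z1 z2 : ℕ} (hy : Nat.Coprime y1 y2) (hz : Nat.Coprime z1 z2)
    (h : (y1 : ℤ) * z2 - y2 * z1 = 0) : y1 = z1 ∧ y2 = z2 := by
  have h' : y1 * z2 = z1 * y2 := by
    have : (y1 : ℤ) * z2 = z1 * y2 := by linarith
    exact_mod_cast this
  have h1 : y1 = z1 := Nat.dvd_antisymm
    (hy.dvd_of_dvd_mul_right (Dvd.intro _ h')) (hz.dvd_of_dvd_mul_right (Dvd.intro _ h'.symm))
  have h'' : y2 * z1 = z2 * y1 := by linarith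
  have h2 : y2 = z2 := Nat.dvd_antisymm
    (hy.symm.dvd_of_dvd_mul_right (Dvd.intro _ h'')) (hz.symm.dvd_of_dvd_mul_right (Dvd.intro _ h''.symm))
  exact ⟨h1, h2⟩

lemma minor_arith {P : ℕ} (hP : 0 < P) (j j' y1 y2 z1 z2 : ℕ) (M H : ℝ) (hM : 0 < M)
    (hy : Nat.Coprime y1 y2) (hz : Nat.Coprime z1 z2) (hy1 : 0 < y1)
    (hy1H : (y1 : ℝ) ≤ H) (hy2H : (y2 : ℝ) ≤ H) (hz1H : (z1 : ℝ) ≤ H) (hz2H : (z2 : ℝ) ≤ H)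
    (hHM : 2 * H < 5 * M)
    (hmin : ∀ D : ℕ, 1 ≤ D → (D : ℝ) ≤ H ^ 2 → ∀ m : ℤ,
      2 * H * P < |(((j : ℤ) * D - P * m : ℤ) : ℝ)| * (5 * M))
    (n1 n2 : ℤ) (h1 : |(((j : ℤ) * y1 - j' * z1 - P * n1 : ℤ) : ℝ)| * (5 * M) ≤ P)
    (h2 : |(((j : ℤ) * y2 - j' * z2 - P * n2 : ℤ) : ℝ)| * (5 * M) ≤ P) :
    y1 = z1 ∧ y2 = z2 ∧ ∃ e l : ℤ, |(e : ℝ)| * (5 * M * y1) ≤ P ∧ (j : ℤ) - j' = P * l + e := by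
  have hPr : (0 : ℝ) < P := by exact_mod_cast hP
  obtain ⟨t1, ht1⟩ : ∃ t1 : ℤ, t1 = (j : ℤ) * y1 - j' * z1 - P * n1 := ⟨_, rfl⟩
  obtain ⟨t2, ht2⟩ : ∃ t2 : ℤ, t2 = (j : ℤ) * y2 - j' * z2 - P * n2 := ⟨_, rfl⟩
  rw [← ht1] at h1
  rw [← ht2] at h2
  have hz1 : (0 : ℝ) ≤ z1 := by positivity
  have hz2 : (0 : ℝ) ≤ z2 := by positivity
  have hy1r : (1 : ℝ) ≤ y1 := by exact_mod_cast hy1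
  have hy2r : (0 : ℝ) ≤ y2 := by positivity
  have hH : 0 ≤ H := hz1.trans hz1H
  have comb : ∀ x y : ℝ, 0 ≤ x → 0 ≤ y → x ≤ H → y ≤ H → |t1 * x - t2 * y| * (5 * M) ≤ 2 * H * P := by
    intro x y hx hy hxH hyH
    have e1 : |t1 * x - t2 * y| ≤ |(t1 : ℝ)| * x + |(t2 : ℝ)| * y := by
      calc _ ≤ |t1 * x| + |t2 * y| := abs_sub _ _
        _ = _ := by rw [abs_mul, abs_mul, abs_of_nonneg hx, abs_of_nonneg hy]
    calc _ ≤ (|(t1 : ℝ)| * x + |(t2 : ℝ)| * y) * (5 * M) := by gcongr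
      _ = (|(t1 : ℝ)| * (5 * M)) * x + (|(t2 : ℝ)| * (5 * M)) * y := by ring
      _ ≤ P * H + P * H := by gcongr
      _ = _ := by ring
  have hw0 : (y1 : ℤ) * z2 - y2 * z1 = 0 := by
    by_contra hne
    have hD : (((y1 : ℤ) * z2 - y2 * z1).natAbs : ℝ) ≤ H ^ 2 := by
      rw [Nat.cast_natAbs, Int.cast_abs]
      push_cast
      rw [abs_le]; constructor <;> nlinarith [mul_nonneg hy2r hz1, mul_nonneg (zero_le_one.trans hy1r) hz2]
    have hsgn : ∃ s : ℤ, |(s : ℝ)| = 1 ∧ ((((y1 : ℤ) * z2 - y2 * z1).natAbs : ℕ) : ℤ) = s * ((y1 : ℤ) * z2 - y2 * z1) := by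
      rcases Int.natAbs_eq ((y1 : ℤ) * z2 - y2 * z1) with h | h
      · exact ⟨1, by simp, by linarith⟩
      · exact ⟨-1, by simp, by linarith⟩
    obtain ⟨s, hs, hsD⟩ := hsgn
    have := hmin _ (Int.natAbs_pos.mpr hne) hD (s * (n1 * z2 - n2 * z1))
    rw [hsD] at this
    have e : (j : ℤ) * (s * ((y1 : ℤ) * z2 - y2 * z1)) - P * (s * (n1 * z2 - n2 * z1)) = s * (t1 * z2 - t2 * z1) := by
      rw [ht1, ht2]; ring
    rw [e] at this
    push_cast at this
    rw [abs_mul, hs, one_mul] at this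
    have := comb z2 z1 hz2 hz1 hz2H hz1H
    linarith
  obtain ⟨e1, e2⟩ := cop_prop hy hz hw0
  refine ⟨e1, e2, ?_⟩
  subst e1 e2
  have hn : n1 * y2 - n2 * y1 = 0 := by
    have := comb y2 y1 (by positivity) (by positivity) hy2H hy1H
    have e : (t1 : ℝ) * y2 - t2 * y1 = -((P : ℝ) * ((n1 * y2 - n2 * y1 : ℤ) : ℝ)) := by
      rw [ht1, ht2]; push_cast; ring
    rw [e, abs_neg, abs_mul, abs_of_pos hPr] at this
    rw [← Int.abs_lt_one_iff]
    by_contra h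
    push Not at h
    have h' : (1 : ℝ) ≤ |((n1 * y2 - n2 * y1 : ℤ) : ℝ)| := by rw [← Int.cast_abs]; exact_mod_cast h
    have : (P : ℝ) * 1 * (5 * M) ≤ 2 * H * P := le_trans (by gcongr) this
    nlinarith
  have hdv : (y1 : ℤ) ∣ n1 := by
    have hc : IsCoprime (y1 : ℤ) (y2 : ℤ) := Nat.isCoprime_iff_coprime.mpr hy
    exact hc.dvd_of_dvd_mul_right ⟨n2, by linarith⟩
  obtain ⟨l, hl⟩ := hdv
  refine ⟨(j : ℤ) - j' - P * l, l, ?_, by ring⟩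
  have e : (t1 : ℝ) = (((j : ℤ) - j' - P * l : ℤ) : ℝ) * y1 := by
    rw [ht1, hl]; push_cast; ring
  rw [e, abs_mul, abs_of_pos (by linarith : (0:ℝ) < y1)] at h1
  linarith

lemma major_arith {P : ℕ} (hP : 0 < P) (j j' v1 v2 w1 w2 q q' : ℕ) (a a' : ℤ) (M V K Q : ℝ)
    (hM : 0 < M) (hK : 0 < K) (hQ : 0 < Q) (hq : 0 < q) (hq' : 0 < q')
    (haq : IsCoprime a (q : ℤ)) (haq' : IsCoprime a' (q' : ℤ))
    (hv : Nat.Coprime v1 v2) (hw : Nat.Coprime w1 w2) (hv1 : 0 < v1)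
    (hv1V : (v1 : ℝ) ≤ V) (hv2V : (v2 : ℝ) ≤ V) (hw1V : (w1 : ℝ) ≤ V) (hw2V : (w2 : ℝ) ≤ V)
    (hqQ : (q : ℝ) < 2 * Q) (hqQ' : (q' : ℝ) < 2 * Q)
    (hb : |(j : ℝ) * q - P * a| ≤ 2 * K * q) (hb' : |(j' : ℝ) * q' - P * a'| ≤ 2 * K * q')
    (hsmall : 4 * Q ^ 2 * (P / (5 * M) + 4 * K * V) ≤ P)
    (n1 n2 : ℤ) (h1 : |(((j : ℤ) * v1 - j' * w1 - P * n1 : ℤ) : ℝ)| * (5 * M) ≤ P)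
    (h2 : |(((j : ℤ) * v2 - j' * w2 - P * n2 : ℤ) : ℝ)| * (5 * M) ≤ P) :
    (|(j : ℝ) * q - P * a| * |(v1 : ℝ) * w2 - v2 * w1| * (5 * M) ≤ 2 * V * P * q) ∧
    ((q : ℤ) ∣ (v1 : ℤ) * w2 - v2 * w1) ∧
    (v1 = w1 → v2 = w2 → ∃ e l : ℤ, |(e : ℝ)| * (5 * M * v1) ≤ P ∧ (j : ℤ) - j' = P * l + e) := by
  have hPr : (0 : ℝ) < P := by exact_mod_cast hP
  have hqr : (0 : ℝ) < q := by exact_mod_cast hq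
  have hqr' : (0 : ℝ) < q' := by exact_mod_cast hq'
  have hV : 0 ≤ V := le_trans (by positivity) hv1V
  have ex : ∀ v w : ℕ, (v : ℝ) ≤ V → (w : ℝ) ≤ V → ∀ n : ℤ,
      |(((j : ℤ) * v - j' * w - P * n : ℤ) : ℝ)| * (5 * M) ≤ P →
      q' * a * v - q * a' * w - q * q' * n = 0 := by
    intro v w hv hw n h
    have hv0 : (0 : ℝ) ≤ v := by positivity
    have hw0 : (0 : ℝ) ≤ w := by positivity
    have e : (P : ℝ) * ((q' * a * v - q * a' * w - q * q' * n : ℤ) : ℝ)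
        = q * q' * (((j : ℤ) * v - j' * w - P * n : ℤ) : ℝ) - q' * ((j : ℝ) * q - P * a) * v
          + q * ((j' : ℝ) * q' - P * a') * w := by push_cast; ring
    have h3 : |(((j : ℤ) * v - j' * w - P * n : ℤ) : ℝ)| ≤ P / (5 * M) := by
      rw [le_div_iff₀ (by positivity)]; exact h
    have e2 : |(P : ℝ) * ((q' * a * v - q * a' * w - q * q' * n : ℤ) : ℝ)| ≤ q * q' * (P / (5 * M) + 4 * K * V) := by
      rw [e]
      calc _ ≤ |q * q' * (((j : ℤ) * v - j' * w - P * n : ℤ) : ℝ)| + |q' * ((j : ℝ) * q - P * a) * v|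
            + |q * ((j' : ℝ) * q' - P * a') * w| := by
              refine (abs_add_le _ _).trans ?_
              gcongr
              exact abs_sub _ _
        _ = q * q' * |(((j : ℤ) * v - j' * w - P * n : ℤ) : ℝ)| + q' * |(j : ℝ) * q - P * a| * v
            + q * |(j' : ℝ) * q' - P * a'| * w := by
              simp only [abs_mul, abs_of_nonneg hv0, abs_of_nonneg hw0, abs_of_pos hqr, abs_of_pos hqr']
        _ ≤ q * q' * (P / (5 * M)) + q' * (2 * K * q) * V + q * (2 * K * q') * V := by gcongr
        _ = _ := by ring
    rw [abs_mul, abs_of_pos hPr] at e2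
    have hpos : 0 < (P : ℝ) / (5 * M) + 4 * K * V := by positivity
    have e3 : (q : ℝ) * q' < 4 * Q ^ 2 := by nlinarith
    have e4 : (q : ℝ) * q' * (P / (5 * M) + 4 * K * V) < P := lt_of_lt_of_le (by gcongr) hsmall
    rw [← Int.abs_lt_one_iff]
    by_contra hh
    push Not at hh
    have h' : (1 : ℝ) ≤ |((q' * a * v - q * a' * w - q * q' * n : ℤ) : ℝ)| := by
      rw [← Int.cast_abs]; exact_mod_cast hh
    nlinarith
  have x1 := ex v1 w1 hv1V hw1V n1 h1
  have x2 := ex v2 w2 hv2V hw2V n2 h2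
  have hvc : IsCoprime (v1 : ℤ) (v2 : ℤ) := Nat.isCoprime_iff_coprime.mpr hv
  have hwc : IsCoprime (w1 : ℤ) (w2 : ℤ) := Nat.isCoprime_iff_coprime.mpr hw
  have prim : ∀ x1 x2 : ℤ, IsCoprime x1 x2 → ∀ d c : ℤ, d ∣ c * x1 → d ∣ c * x2 → d ∣ c := by
    rintro x1 x2 ⟨r, s, hrs⟩ d c h1 h2
    have : c = r * (c * x1) + s * (c * x2) := by linear_combination (-c) * hrs
    rw [this]
    exact dvd_add (h1.mul_left _) (h2.mul_left _)
  have hqq : q = q' := by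
    have d1 : (q : ℤ) ∣ q' := by
      refine prim _ _ hvc _ _ ?_ ?_
      · exact haq.symm.dvd_of_dvd_mul_left ⟨a' * w1 + q' * n1, by linear_combination x1⟩
      · exact haq.symm.dvd_of_dvd_mul_left ⟨a' * w2 + q' * n2, by linear_combination x2⟩
    have d2 : (q' : ℤ) ∣ q := by
      refine prim _ _ hwc _ _ ?_ ?_
      · exact haq'.symm.dvd_of_dvd_mul_left ⟨a * v1 - q * n1, by linear_combination -x1⟩
      · exact haq'.symm.dvd_of_dvd_mul_left ⟨a * v2 - q * n2, by linear_combination -x2⟩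
    exact Nat.dvd_antisymm (by exact_mod_cast d1) (by exact_mod_cast d2)
  subst hqq
  have hqz : (q : ℤ) ≠ 0 := by positivity
  have y1 : a * v1 - a' * w1 - q * n1 = 0 := by
    apply mul_left_cancel₀ hqz; linear_combination x1
  have y2 : a * v2 - a' * w2 - q * n2 = 0 := by
    apply mul_left_cancel₀ hqz; linear_combination x2
  have y1r : (a : ℝ) * v1 - a' * w1 - q * n1 = 0 := by exact_mod_cast y1
  have y2r : (a : ℝ) * v2 - a' * w2 - q * n2 = 0 := by exact_mod_cast y2
  refine ⟨?_, ?_, ?_⟩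
  · have e : ((j : ℝ) * q - P * a) * ((v1 : ℝ) * w2 - v2 * w1)
        = q * ((((j : ℤ) * v1 - j' * w1 - P * n1 : ℤ) : ℝ) * w2
          - (((j : ℤ) * v2 - j' * w2 - P * n2 : ℤ) : ℝ) * w1) := by
      push_cast
      linear_combination (-P * w2 : ℝ) * y1r + (P * w1 : ℝ) * y2r
    rw [← abs_mul, e, abs_mul, abs_of_pos hqr]
    set t1 : ℝ := (((j : ℤ) * v1 - j' * w1 - P * n1 : ℤ) : ℝ)
    set t2 : ℝ := (((j : ℤ) * v2 - j' * w2 - P * n2 : ℤ) : ℝ)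
    have e1 : |t1 * w2 - t2 * w1| ≤ |t1| * V + |t2| * V := by
      calc _ ≤ |t1 * w2| + |t2 * w1| := abs_sub _ _
        _ = |t1| * w2 + |t2| * w1 := by rw [abs_mul, abs_mul, Nat.abs_cast, Nat.abs_cast]
        _ ≤ _ := by gcongr
    calc q * |t1 * w2 - t2 * w1| * (5 * M) ≤ q * (|t1| * V + |t2| * V) * (5 * M) := by gcongr
      _ = q * V * (|t1| * (5 * M)) + q * V * (|t2| * (5 * M)) := by ring
      _ ≤ q * V * P + q * V * P := by gcongr
      _ = _ := by ring
  · refine haq.symm.dvd_of_dvd_mul_left ⟨n1 * w2 - n2 * w1, ?_⟩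
    linear_combination w2 * y1 - w1 * y2
  · rintro rfl rfl
    have : (q : ℤ) ∣ a - a' := prim _ _ hvc _ _ ⟨n1, by linear_combination y1⟩ ⟨n2, by linear_combination y2⟩
    obtain ⟨l, hl⟩ := this
    have hn1 : n1 = l * v1 := by
      apply mul_left_cancel₀ hqz; linear_combination -y1 + v1 * hl
    refine ⟨(j : ℤ) - j' - P * l, l, ?_, by ring⟩
    have e : (((j : ℤ) * v1 - j' * v1 - P * n1 : ℤ) : ℝ) = (((j : ℤ) - j' - P * l : ℤ) : ℝ) * v1 := by
      rw [hn1]; push_cast; ring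
    rw [e, abs_mul, Nat.abs_cast] at h1
    linarith

def Dm (d : ℕ) : Matrix (Fin 2) (Fin 2) ℕ := !![d, 1; 1, 0]

def Mw (w : List ℕ) : Matrix (Fin 2) (Fin 2) ℕ := (w.map Dm).prod

def dig (A : ℕ) (w : List ℕ) : Prop := ∀ d ∈ w, 1 ≤ d ∧ d ≤ A

lemma dig_nil (A : ℕ) : dig A [] := by simp [dig]

lemma dig_append {A : ℕ} {u v : List ℕ} (hu : dig A u) (hv : dig A v) : dig A (u ++ v) := by
  intro d hd
  rcases List.mem_append.mp hd with h | h
  exacts [hu d h, hv d h]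

lemma dig_left {A : ℕ} {u v : List ℕ} (h : dig A (u ++ v)) : dig A u := fun d hd => h d (by simp [hd])
lemma dig_right {A : ℕ} {u v : List ℕ} (h : dig A (u ++ v)) : dig A v := fun d hd => h d (by simp [hd])
lemma dig_rev {A : ℕ} {u : List ℕ} (h : dig A u) : dig A u.reverse := fun d hd => h d (by simpa using hd)

lemma Mw_nil : Mw [] = 1 := rfl

lemma Mw_append (u v : List ℕ) : Mw (u ++ v) = Mw u * Mw v := by simp [Mw]

lemma Mw_app (u v : List ℕ) (i j : Fin 2) :
    Mw (u ++ v) i j = Mw u i 0 * Mw v 0 j + Mw u i 1 * Mw v 1 j := by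
  rw [Mw_append, Matrix.mul_apply, Fin.sum_univ_two]

lemma Mw_cons0 (d : ℕ) (l : List ℕ) (k : Fin 2) : Mw (d :: l) 0 k = d * Mw l 0 k + Mw l 1 k := by
  have : Mw (d :: l) = Dm d * Mw l := by simp [Mw]
  rw [this, Matrix.mul_apply, Fin.sum_univ_two]
  simp [Dm]

lemma Mw_cons1 (d : ℕ) (l : List ℕ) (k : Fin 2) : Mw (d :: l) 1 k = Mw l 0 k := by
  have : Mw (d :: l) = Dm d * Mw l := by simp [Mw]
  rw [this, Matrix.mul_apply, Fin.sum_univ_two]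
  simp [Dm]

lemma cont_eq : ∀ w : List ℕ, cont w = Mw w 0 0
  | [] => by simp [cont, Mw]
  | [d] => by simp [cont, Mw_cons0, Mw_nil]
  | d :: e :: l => by
    rw [cont, cont_eq (e :: l), cont_eq l, Mw_cons0 d, Mw_cons1]

lemma Mw_rev (w : List ℕ) : Mw w.reverse = (Mw w).transpose := by
  induction w with
  | nil => simp [Mw_nil]
  | cons d l ih =>
    have h1 : Mw (d :: l) = Dm d * Mw l := by simp [Mw]
    have h2 : (Dm d).transpose = Dm d := by
      ext i j; fin_cases i <;> fin_cases j <;> simp [Dm]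
    have h3 : Mw [d] = Dm d := by simp [Mw]
    rw [List.reverse_cons, Mw_append, ih, h1, Matrix.transpose_mul, h2, h3]

lemma Mw_det (w : List ℕ) : (Mw w 0 0 : ℤ) * Mw w 1 1 - Mw w 0 1 * Mw w 1 0 = (-1) ^ w.length := by
  induction w with
  | nil => simp [Mw_nil]
  | cons d l ih =>
    rw [Mw_cons0, Mw_cons0, Mw_cons1, Mw_cons1, List.length_cons, pow_succ, ← ih]
    push_cast; ring

lemma Mw_le10 {A : ℕ} {w : List ℕ} (h : dig A w) : 1 ≤ Mw w 0 0 ∧ Mw w 1 0 ≤ Mw w 0 0 := by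
  induction w with
  | nil => simp [Mw_nil]
  | cons d l ih =>
    have h1 := ih (fun x hx => h x (by simp [hx]))
    have h2 := (h d (by simp)).1
    rw [Mw_cons0, Mw_cons1]
    constructor <;> nlinarith

lemma Mw_pos {A : ℕ} {w : List ℕ} (h : dig A w) : 1 ≤ Mw w 0 0 := (Mw_le10 h).1

lemma Mw_le01 {A : ℕ} {w : List ℕ} (h : dig A w) : Mw w 0 1 ≤ Mw w 0 0 := by
  have := (Mw_le10 (dig_rev h)).2
  rw [Mw_rev] at this
  exact this

lemma Mw_le11 {A : ℕ} {w : List ℕ} (h : dig A w) : Mw w 1 1 ≤ Mw w 0 0 := by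
  cases w with
  | nil => simp [Mw_nil]
  | cons d l =>
    refine le_trans ?_ (Mw_le10 h).2
    rw [Mw_cons1, Mw_cons1]
    exact Mw_le01 (A := A) (fun x hx => h x (by simp [hx]))

lemma Mw_lb10 {A : ℕ} {w : List ℕ} (h : dig A w) (hw : w ≠ []) : Mw w 0 0 ≤ (A + 1) * Mw w 1 0 := by
  cases w with
  | nil => exact absurd rfl hw
  | cons d l =>
    have h1 : dig A l := fun x hx => h x (by simp [hx])
    have h2 := (h d (by simp)).2
    rw [Mw_cons1, Mw_cons0]
    nlinarith [(Mw_le10 h1).2]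

lemma Mw_lb01 {A : ℕ} {w : List ℕ} (h : dig A w) (hw : w ≠ []) : Mw w 0 0 ≤ (A + 1) * Mw w 0 1 := by
  have := Mw_lb10 (dig_rev h) (by simpa using hw)
  rw [Mw_rev] at this
  exact this

lemma Mw_cop10 (w : List ℕ) : Nat.Coprime (Mw w 0 0) (Mw w 1 0) := by
  rw [← Nat.isCoprime_iff_coprime]
  have h := Mw_det w
  have h1 : ((-1 : ℤ) ^ w.length) * (-1) ^ w.length = 1 := by
    rw [← mul_pow]; simp
  exact ⟨(-1) ^ w.length * Mw w 1 1, -(-1) ^ w.length * Mw w 0 1, by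
    linear_combination (-1 : ℤ) ^ w.length * h + h1⟩

lemma cont_app_ge (u v : List ℕ) : cont u * cont v ≤ cont (u ++ v) := by
  rw [cont_eq, cont_eq, cont_eq, Mw_app]; omega

lemma cont_app_le {A : ℕ} {u v : List ℕ} (hu : dig A u) (hv : dig A v) :
    cont (u ++ v) ≤ 2 * (cont u * cont v) := by
  rw [cont_eq, cont_eq, cont_eq, Mw_app]
  have := Nat.mul_le_mul (Mw_le01 hu) (Mw_le10 hv).2
  omega

lemma cont_pos {A : ℕ} {u : List ℕ} (hu : dig A u) : 1 ≤ cont u := by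
  rw [cont_eq]; exact Mw_pos hu

lemma col_inj {A : ℕ} : ∀ (u v : List ℕ), dig A u → dig A v → u.length = v.length →
    Mw u 0 0 = Mw v 0 0 → Mw u 1 0 = Mw v 1 0 → u = v
  | [], [], _, _, _, _, _ => rfl
  | [], _ :: _, _, _, h, _, _ => by simp at h
  | _ :: _, [], _, _, h, _, _ => by simp at h
  | d :: u, e :: v, hu, hv, hl, h0, h1 => by
    have hu' : dig A u := fun x hx => hu x (by simp [hx])
    have hv' : dig A v := fun x hx => hv x (by simp [hx])
    rw [Mw_cons0, Mw_cons0] at h0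
    rw [Mw_cons1, Mw_cons1] at h1
    rw [h1] at h0
    have hl' : u.length = v.length := by simpa using hl
    have p1 := Mw_pos hv'
    have p2 := (Mw_le10 hv').2
    have p3 := (Mw_le10 hu').2
    rw [h1] at p3
    have key : d = e := by
      by_contra hne
      have hun : u ≠ [] := by
        rintro rfl
        have : v = [] := by simpa using hl'.symm
        subst this
        simp [Mw_nil] at h0
        exact hne h0
      have hvn : v ≠ [] := by
        rintro rfl
        exact hun (by simpa using hl')
      have q1 : 1 ≤ Mw u 1 0 := by
        by_contra h
        have := Mw_lb10 hu' hun
        have h4 := Mw_pos hu'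
        have : Mw u 1 0 = 0 := by omega
        simp_all
      have q2 : 1 ≤ Mw v 1 0 := by
        by_contra h
        have := Mw_lb10 hv' hvn
        have h4 := Mw_pos hv'
        have : Mw v 1 0 = 0 := by omega
        simp_all
      rcases lt_or_gt_of_ne hne with h | h
      · have : (d + 1) * Mw v 0 0 ≤ e * Mw v 0 0 := Nat.mul_le_mul_right _ h
        nlinarith
      · have : (e + 1) * Mw v 0 0 ≤ d * Mw v 0 0 := Nat.mul_le_mul_right _ h
        nlinarith
    subst key
    rw [col_inj u v hu' hv' hl' h1 (by omega)]

lemma row_inj {A : ℕ} (u v : List ℕ) (hu : dig A u) (hv : dig A v) (hl : u.length = v.length)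
    (h0 : Mw u 0 0 = Mw v 0 0) (h1 : Mw u 0 1 = Mw v 0 1) : u = v := by
  have := col_inj u.reverse v.reverse (dig_rev hu) (dig_rev hv) (by simpa using hl)
    (by rw [Mw_rev, Mw_rev]; exact h0) (by rw [Mw_rev, Mw_rev]; exact h1)
  simpa using this

def wdg (u v : List ℕ) : ℤ := (Mw u 0 0 : ℤ) * Mw v 1 0 - Mw u 1 0 * Mw v 0 0

lemma wdg_app (u v v' : List ℕ) : |wdg (u ++ v) (u ++ v')| = |wdg v v'| := by
  have : wdg (u ++ v) (u ++ v') = (-1) ^ u.length * wdg v v' := by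
    rw [← Mw_det]
    unfold wdg
    simp only [Mw_app]
    push_cast; ring
  rw [this, abs_mul]; simp

lemma split_diff : ∀ g g' : List ℕ, g.length = g'.length → g ≠ g' →
    ∃ u d d' t t', g = u ++ d :: t ∧ g' = u ++ d' :: t' ∧ d ≠ d'
  | [], [], _, h => absurd rfl h
  | [], _ :: _, h, _ => by simp at h
  | _ :: _, [], h, _ => by simp at h
  | d :: l, e :: m, hl, h => by
    by_cases hde : d = e
    · subst hde
      obtain ⟨u, x, x', t, t', h1, h2, h3⟩ := split_diff l m (by simpa using hl) (by simpa using h)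
      exact ⟨d :: u, x, x', t, t', by simp [h1], by simp [h2], h3⟩
    · exact ⟨[], d, e, l, m, rfl, rfl, hde⟩

lemma sep {A : ℕ} (g g' z z' : List ℕ) (hg : dig A g) (hg' : dig A g') (hz : dig A z) (hz' : dig A z')
    (hzn : z ≠ []) (hzn' : z' ≠ []) (hl : g.length = g'.length) (hne : g ≠ g') :
    (cont (g ++ z) : ℤ) * cont (g' ++ z') ≤
      (A + 2) ^ 3 * (cont g * cont g') * |wdg (g ++ z) (g' ++ z')| := by
  obtain ⟨u, d, d', t, t', rfl, rfl, hd⟩ := split_diff g g' hl hne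
  have hu : dig A u := dig_left hg
  have key : ∀ (d : ℕ) (t z : List ℕ), dig A (u ++ d :: t) → dig A z →
      (cont (u ++ d :: t ++ z)) ≤ (A + 2) * cont (u ++ d :: t) * Mw (t ++ z) 0 0 := by
    intro d t z h1 h2
    have h3 : dig A (d :: t) := dig_right h1
    have h4 : dig A (t ++ z) := dig_append (fun x hx => h3 x (by simp [hx])) h2
    have h5 : cont u * 1 ≤ cont (u ++ d :: t) :=
      le_trans (Nat.mul_le_mul_left _ (cont_pos h3)) (cont_app_ge _ _)
    have h6 := (h3 d (by simp)).2
    rw [List.append_assoc, cont_eq, Mw_app, List.cons_append, Mw_cons0, Mw_cons1]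
    have h7 := Mw_le01 hu
    have h8 := (Mw_le10 h4).2
    rw [cont_eq u] at h5
    set x := Mw (t ++ z) 0 0
    calc _ ≤ Mw u 0 0 * (A * x + x) + Mw u 0 0 * x := by gcongr
      _ = (A + 2) * (Mw u 0 0 * 1) * x := by ring
      _ ≤ _ := by gcongr
  have k1 := key d t z hg hz
  have k2 := key d' t' z' hg' hz'
  have h3 : dig A (d :: t) := dig_right hg
  have h4 : dig A (t ++ z) := dig_append (fun x hx => h3 x (by simp [hx])) hz
  have h3' : dig A (d' :: t') := dig_right hg'
  have h4' : dig A (t' ++ z') := dig_append (fun x hx => h3' x (by simp [hx])) hz'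
  have w : (Mw (t ++ z) 0 0 : ℤ) * Mw (t' ++ z') 0 0 ≤ (A + 1) * |wdg (u ++ d :: t ++ z) (u ++ d' :: t' ++ z')| := by
    rw [List.append_assoc, List.append_assoc, wdg_app]
    unfold wdg
    rw [List.cons_append, List.cons_append, Mw_cons0, Mw_cons0, Mw_cons1, Mw_cons1]
    have a1 := Mw_lb10 h4 (by simp [hzn])
    have a2 := Mw_lb10 h4' (by simp [hzn'])
    have b1 := (Mw_le10 h4).2
    have b2 := (Mw_le10 h4').2
    zify at a1 a2 b1 b2
    push_cast
    set x : ℤ := (Mw (t ++ z) 0 0 : ℤ)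
    set x' : ℤ := (Mw (t' ++ z') 0 0 : ℤ)
    set y : ℤ := (Mw (t ++ z) 1 0 : ℤ)
    set y' : ℤ := (Mw (t' ++ z') 1 0 : ℤ)
    have x0 : 0 ≤ x := by positivity
    have x0' : 0 ≤ x' := by positivity
    have xx := mul_nonneg x0 x0'
    have e : (d * x + y) * x' - x * (d' * x' + y') = (d - d' : ℤ) * (x * x') + y * x' - x * y' := by ring
    rw [e]
    rcases lt_or_gt_of_ne hd with h | h
    · have h' : (d - d' : ℤ) ≤ -1 := by omega
      have : (A + 1) * (x * y') ≤ (A + 1) * |(d - d' : ℤ) * (x * x') + y * x' - x * y'| := by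
        gcongr
        refine le_trans ?_ (neg_le_abs _)
        nlinarith
      nlinarith
    · have h' : (1 : ℤ) ≤ d - d' := by omega
      have : (A + 1) * (y * x') ≤ (A + 1) * |(d - d' : ℤ) * (x * x') + y * x' - x * y'| := by
        gcongr
        refine le_trans ?_ (le_abs_self _)
        nlinarith
      nlinarith
  set W := |wdg (u ++ d :: t ++ z) (u ++ d' :: t' ++ z')|
  have hW : 0 ≤ W := abs_nonneg _
  zify at k1 k2
  calc _ ≤ ((A + 2 : ℤ) * cont (u ++ d :: t) * Mw (t ++ z) 0 0) * ((A + 2) * cont (u ++ d' :: t') * Mw (t' ++ z') 0 0) := by gcongr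
    _ = (A + 2 : ℤ) ^ 2 * (cont (u ++ d :: t) * cont (u ++ d' :: t')) * (Mw (t ++ z) 0 0 * Mw (t' ++ z') 0 0) := by ring
    _ ≤ (A + 2 : ℤ) ^ 2 * (cont (u ++ d :: t) * cont (u ++ d' :: t')) * ((A + 2) * W) := by
      refine mul_le_mul_of_nonneg_left (w.trans ?_) (by positivity)
      gcongr
      omega
    _ = _ := by ring

structure Ens where
  ι : Type
  fι : Fintype ι
  i0 : ι
  p : ι → ℝ
  wd : ι → List ℕ

attribute [instance] Ens.fι

namespace Ens

def ex (E : Ens) (f : List ℕ → ℂ) : ℂ := ∑ i, (E.p i : ℂ) * f (E.wd i)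

def mul (E F : Ens) : Ens where
  ι := E.ι × F.ι
  fι := inferInstance
  i0 := (E.i0, F.i0)
  p := fun i => E.p i.1 * F.p i.2
  wd := fun i => E.wd i.1 ++ F.wd i.2

def pure (w : List ℕ) : Ens where
  ι := Unit
  fι := inferInstance
  i0 := ()
  p := fun _ => 1
  wd := fun _ => w

def c (E : Ens) : ℝ := cont (E.wd E.i0)

structure Ok (A : ℕ) (S : Finset ℕ) (κ : ℝ) (E : Ens) : Prop where
  p0 : ∀ i, 0 ≤ E.p i
  p1 : ∑ i, E.p i = 1
  inj : Function.Injective E.wd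
  len : ∀ i j, (E.wd i).length = (E.wd j).length
  dg : ∀ i, dig A (E.wd i)
  mem : ∀ i, ∀ d ∈ E.wd i, d ∈ S
  ratio : ∀ i j a b, (Mw (E.wd i) a b : ℝ) ≤ κ * Mw (E.wd j) a b

def At (θ : ℝ) (E : Ens) : Prop := ∀ i, E.p i ≤ (θ * cont (E.wd i)) ^ (-(5/3) : ℝ)

lemma ex_mul (E F : Ens) (f : List ℕ → ℂ) :
    (E.mul F).ex f = E.ex fun u => F.ex fun v => f (u ++ v) := by
  unfold ex mul
  simp only [Finset.mul_sum]
  rw [Fintype.sum_prod_type]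
  refine Finset.sum_congr rfl fun i _ => Finset.sum_congr rfl fun k _ => ?_
  push_cast; ring

lemma ex_pure (w : List ℕ) (f : List ℕ → ℂ) : (pure w).ex f = f w := by
  change ∑ _ : Unit, ((1 : ℝ) : ℂ) * f w = f w
  simp

lemma ok_pure {A : ℕ} {S : Finset ℕ} {w : List ℕ} (h : dig A w) (h' : ∀ d ∈ w, d ∈ S) :
    Ok A S 1 (pure w) where
  p0 := fun _ => zero_le_one
  p1 := by
    change ∑ _ : Unit, (1 : ℝ) = 1
    simp
  inj := fun _ _ _ => rfl
  len := fun _ _ => rfl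
  dg := fun _ => h
  mem := fun _ => h'
  ratio := fun _ _ a b => by simp [pure]

lemma ok_mul {A : ℕ} {S : Finset ℕ} {κ κ' : ℝ} {E F : Ens} (hκ : 0 ≤ κ)
    (hE : Ok A S κ E) (hF : Ok A S κ' F) : Ok A S (κ * κ') (E.mul F) where
  p0 := fun i => mul_nonneg (hE.p0 _) (hF.p0 _)
  p1 := by
    change ∑ i : E.ι × F.ι, E.p i.1 * F.p i.2 = 1
    rw [Fintype.sum_prod_type, ← Finset.sum_mul_sum, hE.p1, hF.p1, one_mul]
  inj := by
    intro i j h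
    obtain ⟨h1, h2⟩ := List.append_inj h (hE.len _ _)
    exact Prod.ext (hE.inj h1) (hF.inj h2)
  len := fun i j => by
    change (E.wd _ ++ F.wd _).length = (E.wd _ ++ F.wd _).length
    rw [List.length_append, List.length_append, hE.len i.1 j.1, hF.len i.2 j.2]
  dg := fun i => dig_append (hE.dg _) (hF.dg _)
  mem := fun i d hd => by
    rcases List.mem_append.mp hd with h | h
    exacts [hE.mem _ d h, hF.mem _ d h]
  ratio := fun i j a b => by
    change (Mw (E.wd _ ++ F.wd _) a b : ℝ) ≤ κ * κ' * Mw (E.wd _ ++ F.wd _) a b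
    rw [Mw_app, Mw_app]
    push_cast
    have e1 := hE.ratio i.1 j.1 a 0
    have e2 := hE.ratio i.1 j.1 a 1
    have f1 := hF.ratio i.2 j.2 0 b
    have f2 := hF.ratio i.2 j.2 1 b
    calc _ ≤ (κ * Mw (E.wd j.1) a 0) * (κ' * Mw (F.wd j.2) 0 b) +
        (κ * Mw (E.wd j.1) a 1) * (κ' * Mw (F.wd j.2) 1 b) := by gcongr
      _ = _ := by ring

lemma ok_mono {A : ℕ} {S : Finset ℕ} {κ κ' : ℝ} {E : Ens} (h : κ ≤ κ') (hE : Ok A S κ E) : Ok A S κ' E :=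
  { hE with ratio := fun i j a b => (hE.ratio i j a b).trans (by gcongr) }

lemma Ok.c_pos {A : ℕ} {S : Finset ℕ} {κ : ℝ} {E : Ens} (hE : Ok A S κ E) : 1 ≤ E.c := by
  unfold c; exact_mod_cast cont_pos (hE.dg _)

lemma Ok.le_c {A : ℕ} {S : Finset ℕ} {κ : ℝ} {E : Ens} (hE : Ok A S κ E) (i : E.ι) :
    (cont (E.wd i) : ℝ) ≤ κ * E.c := by
  unfold c; rw [cont_eq, cont_eq]; exact hE.ratio _ _ _ _

lemma Ok.c_le {A : ℕ} {S : Finset ℕ} {κ : ℝ} {E : Ens} (hE : Ok A S κ E) (i : E.ι) :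
    E.c ≤ κ * cont (E.wd i) := by
  unfold c; rw [cont_eq, cont_eq]; exact hE.ratio _ _ _ _

lemma c_mul_ge (E F : Ens) : E.c * F.c ≤ (E.mul F).c := by
  unfold c; exact_mod_cast cont_app_ge _ _

lemma c_mul_le {A : ℕ} {S : Finset ℕ} {κ κ' : ℝ} {E F : Ens}
    (hE : Ok A S κ E) (hF : Ok A S κ' F) : (E.mul F).c ≤ 2 * (E.c * F.c) := by
  unfold c; exact_mod_cast cont_app_le (hE.dg _) (hF.dg _)

lemma at_le {A : ℕ} {S : Finset ℕ} {κ : ℝ} {E : Ens} (hE : Ok A S κ E) (hκ : 0 < κ) (h : At 1 E) (i : E.ι) :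
    E.p i ≤ κ ^ (5/3 : ℝ) * E.c ^ (-(5/3) : ℝ) := by
  have h1 := hE.c_pos
  have h2 := hE.c_le i
  have h3 : E.c / κ ≤ cont (E.wd i) := by rw [div_le_iff₀ hκ]; linarith
  calc E.p i ≤ (1 * (cont (E.wd i) : ℝ)) ^ (-(5/3) : ℝ) := h i
    _ ≤ (E.c / κ) ^ (-(5/3) : ℝ) := by
      rw [one_mul]
      exact Real.rpow_le_rpow_of_nonpos (by positivity) h3 (by norm_num)
    _ = _ := by
      rw [Real.div_rpow (by linarith) hκ.le, div_eq_mul_inv, ← Real.rpow_neg hκ.le, neg_neg, mul_comm]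

lemma at_mul {A : ℕ} {S : Finset ℕ} {κ κ' θ θ' : ℝ} {E F : Ens} (hE : Ok A S κ E) (hF : Ok A S κ' F)
    (hθ : 0 < θ) (hθ' : 0 < θ') (h2 : 2 ≤ θ * θ')
    (h : At θ E) (h' : At θ' F) : At 1 (E.mul F) := by
  intro i
  change E.p i.1 * F.p i.2 ≤ (1 * (cont (E.wd i.1 ++ F.wd i.2) : ℝ)) ^ (-(5/3) : ℝ)
  have c1 : (1 : ℝ) ≤ cont (E.wd i.1) := by exact_mod_cast cont_pos (hE.dg _)
  have c2 : (1 : ℝ) ≤ cont (F.wd i.2) := by exact_mod_cast cont_pos (hF.dg _)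
  have c3 : (1 : ℝ) ≤ cont (E.wd i.1 ++ F.wd i.2) := by
    exact_mod_cast cont_pos (dig_append (hE.dg _) (hF.dg _))
  have c4 : (cont (E.wd i.1 ++ F.wd i.2) : ℝ) ≤ 2 * (cont (E.wd i.1) * cont (F.wd i.2)) := by
    exact_mod_cast cont_app_le (hE.dg _) (hF.dg _)
  calc _ ≤ (θ * cont (E.wd i.1)) ^ (-(5/3) : ℝ) * (θ' * cont (F.wd i.2)) ^ (-(5/3) : ℝ) := by
        have := hF.p0 i.2
        gcongr
        · exact h _
        · exact h' _
    _ = ((θ * θ') * (cont (E.wd i.1) * cont (F.wd i.2))) ^ (-(5/3) : ℝ) := by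
        rw [← Real.mul_rpow (by positivity) (by positivity)]; congr 1; ring
    _ ≤ _ := by
        rw [one_mul]
        refine Real.rpow_le_rpow_of_nonpos (by linarith) (c4.trans ?_) (by norm_num)
        gcongr

lemma at_pure_nil : At 1 (pure []) := by
  intro i; simp [pure, cont]

variable (B : ℕ → Ens)

def seg (i : ℕ) : ℕ → Ens
  | 0 => pure []
  | n + 1 => (seg i n).mul (B (i + n))

def rseg (i : ℕ) : ℕ → Ens
  | 0 => pure []
  | n + 1 => (B (i + n)).mul (rseg i n)

lemma ex_seg_add (i n m : ℕ) (f : List ℕ → ℂ) :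
    (seg B i (n + m)).ex f = (seg B i n).ex fun u => (seg B (i + n) m).ex fun v => f (u ++ v) := by
  induction m generalizing f with
  | zero => simp [seg, ex_pure]
  | succ m ih =>
    rw [← add_assoc, seg, ex_mul, ih]
    simp only [seg, ex_mul, List.append_assoc, add_assoc]

lemma ex_rseg_add (i n m : ℕ) (f : List ℕ → ℂ) :
    (rseg B i (n + m)).ex f = (rseg B (i + n) m).ex fun u => (rseg B i n).ex fun v => f (u ++ v) := by
  induction m generalizing f with
  | zero => simp [rseg, ex_pure]
  | succ m ih =>
    rw [← add_assoc, rseg, ex_mul]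
    simp only [ih, rseg, ex_mul, List.append_assoc, add_assoc]

lemma base_seg_add (i n m : ℕ) :
    (seg B i (n + m)).wd (seg B i (n + m)).i0 =
      (seg B i n).wd (seg B i n).i0 ++ (seg B (i + n) m).wd (seg B (i + n) m).i0 := by
  induction m with
  | zero => simp [seg, pure]
  | succ m ih =>
    have e1 : (seg B i (n + (m + 1))).wd (seg B i (n + (m + 1))).i0
      = (seg B i (n + m)).wd (seg B i (n + m)).i0 ++ (B (i + (n + m))).wd (B (i + (n + m))).i0 := rfl
    have e2 : (seg B (i + n) (m + 1)).wd (seg B (i + n) (m + 1)).i0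
      = (seg B (i + n) m).wd (seg B (i + n) m).i0 ++ (B (i + n + m)).wd (B (i + n + m)).i0 := rfl
    rw [e1, e2, ih, add_assoc, List.append_assoc]

/-- hypotheses on a sequence of blocks -/
structure Blk (A : ℕ) (S : Finset ℕ) (C1 : ℝ) (B : ℕ → Ens) : Prop where
  ok : ∀ i, Ok A S (Real.exp ((1/2) ^ (i + 2))) (B i)
  at2 : ∀ i, At 2 (B i)
  lb : ∀ i, 2 ^ (i + 1) ≤ (B i).c
  ub : ∀ i, (B i).c ≤ C1 ^ (i + 1)

variable {B}

lemma Blk.seg_ok' {A : ℕ} {S : Finset ℕ} {C1 : ℝ} (h : Blk A S C1 B) (i n : ℕ) :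
    Ok A S (Real.exp ((1/2) ^ (i + 1) - (1/2) ^ (i + n + 1))) (seg B i n) := by
  induction n with
  | zero => simpa [seg] using ok_pure (dig_nil A) (by simp)
  | succ n ih =>
    have := ok_mul (Real.exp_pos _).le ih (h.ok (i + n))
    rw [← Real.exp_add] at this
    convert this using 2
    · ring
    · rfl

lemma Blk.rseg_ok' {A : ℕ} {S : Finset ℕ} {C1 : ℝ} (h : Blk A S C1 B) (i n : ℕ) :
    Ok A S (Real.exp ((1/2) ^ (i + 1) - (1/2) ^ (i + n + 1))) (rseg B i n) := by
  induction n with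
  | zero => simpa [rseg] using ok_pure (dig_nil A) (by simp)
  | succ n ih =>
    have := ok_mul (Real.exp_pos _).le (h.ok (i + n)) ih
    rw [← Real.exp_add] at this
    convert this using 2
    · ring
    · rfl

lemma exp_half_aux (i n : ℕ) : Real.exp ((1/2) ^ (i + 1) - (1/2) ^ (i + n + 1)) ≤ 2 := by
  have h1 : ((1/2 : ℝ)) ^ (i + 1) ≤ 1 / 2 := by
    rw [pow_succ]
    have : (1/2 : ℝ) ^ i ≤ 1 := pow_le_one₀ (by norm_num) (by norm_num)
    linarith
  have h2 : (0 : ℝ) ≤ (1/2) ^ (i + n + 1) := by positivity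
  rw [← Real.le_log_iff_exp_le (by norm_num)]
  linarith [Real.log_two_gt_d9]

lemma Blk.seg_ok {A : ℕ} {S : Finset ℕ} {C1 : ℝ} (h : Blk A S C1 B) (i n : ℕ) : Ok A S 2 (seg B i n) :=
  ok_mono (exp_half_aux i n) (h.seg_ok' i n)

lemma Blk.rseg_ok {A : ℕ} {S : Finset ℕ} {C1 : ℝ} (h : Blk A S C1 B) (i n : ℕ) : Ok A S 2 (rseg B i n) :=
  ok_mono (exp_half_aux i n) (h.rseg_ok' i n)

lemma Blk.seg_at {A : ℕ} {S : Finset ℕ} {C1 : ℝ} (h : Blk A S C1 B) (i n : ℕ) : At 1 (seg B i n) := by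
  induction n with
  | zero => exact at_pure_nil
  | succ n ih => exact at_mul (h.seg_ok _ _) (h.ok _) (by norm_num) (by norm_num) (by norm_num) ih (h.at2 _)

lemma Blk.rseg_at {A : ℕ} {S : Finset ℕ} {C1 : ℝ} (h : Blk A S C1 B) (i n : ℕ) : At 1 (rseg B i n) := by
  induction n with
  | zero => exact at_pure_nil
  | succ n ih => exact at_mul (h.ok _) (h.rseg_ok _ _) (by norm_num) (by norm_num) (by norm_num) (h.at2 _) ih

lemma ens_ls {P : ℕ} [NeZero P] {A : ℕ} {S : Finset ℕ} {κ1 κ2 κ3 κ4 : ℝ} (X G L Y : Ens)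
    (hX : Ok A S κ1 X) (hG : Ok A S κ2 G) (hL : Ok A S κ3 L) (hY : Ok A S κ4 Y)
    (M : ℝ) (hM : 1 ≤ M) (hXM : ∀ x, (cont (X.wd x) : ℝ) ≤ M) (hXP : ∀ x, cont (X.wd x) < P)
    (μ pg py : ℝ) (hμ : ∀ x, X.p x ≤ μ) (hg : ∀ x, G.p x ≤ pg) (hy : ∀ x, Y.p x ≤ py)
    (Θ : Finset ℕ) (hΘ : ∀ j ∈ Θ, j < P) (C0 : ℕ)
    (hclose : ∀ l, ∀ j ∈ Θ, ∀ j' ∈ Θ, ∀ g g' y y', ∀ n1 n2 : ℤ,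
      |(((j : ℤ) * Mw (G.wd g ++ (L.wd l ++ Y.wd y)) 0 0
        - j' * Mw (G.wd g' ++ (L.wd l ++ Y.wd y')) 0 0 - P * n1 : ℤ) : ℝ)| * (5 * M) ≤ P →
      |(((j : ℤ) * Mw (G.wd g ++ (L.wd l ++ Y.wd y)) 1 0
        - j' * Mw (G.wd g' ++ (L.wd l ++ Y.wd y')) 1 0 - P * n2 : ℤ) : ℝ)| * (5 * M) ≤ P →
      g = g' ∧ y = y' ∧ ∃ e l : ℤ, |e| ≤ C0 ∧ (j : ℤ) - j' = P * l + e) :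
    ∑ j ∈ Θ, ‖X.ex fun x => G.ex fun g => L.ex fun l => Y.ex fun y =>
      ZMod.stdAddChar ((j : ZMod P) * ((cont (x ++ (g ++ (l ++ y))) : ℕ) : ZMod P))‖ ^ 2
      ≤ 1600 * M ^ 2 * μ * (pg * py * (2 * C0 + 1)) := by
  classical
  have hpg : 0 ≤ pg := (hG.p0 G.i0).trans (hg _)
  have hpy : 0 ≤ py := (hY.p0 Y.i0).trans (hy _)
  have hμ0 : 0 ≤ μ := (hX.p0 X.i0).trans (hμ _)
  set T : L.ι → ℕ → ℂ := fun l j => ∑ γ : G.ι × Y.ι, ((G.p γ.1 * Y.p γ.2 : ℝ) : ℂ) * ∑ x, (X.p x : ℂ) *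
      ZMod.stdAddChar ((j : ZMod P) * ((Mw (X.wd x) 0 0 * Mw (G.wd γ.1 ++ (L.wd l ++ Y.wd γ.2)) 0 0 +
        Mw (X.wd x) 0 1 * Mw (G.wd γ.1 ++ (L.wd l ++ Y.wd γ.2)) 1 0 : ℕ) : ZMod P)) with hT
  have hrep : ∀ j : ℕ, (X.ex fun x => G.ex fun g => L.ex fun l => Y.ex fun y =>
      (ZMod.stdAddChar ((j : ZMod P) * ((cont (x ++ (g ++ (l ++ y))) : ℕ) : ZMod P)) : ℂ))
      = ∑ l, (L.p l : ℂ) * T l j := by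
    intro j
    simp only [hT, ex, Fintype.sum_prod_type, Finset.mul_sum, cont_eq]
    simp only [Mw_app (X.wd _)]
    rw [Finset.sum_comm]
    conv_lhs =>
      enter [2, g]
      rw [Finset.sum_comm]
    rw [Finset.sum_comm]
    refine Finset.sum_congr rfl fun l _ => Finset.sum_congr rfl fun g _ => ?_
    rw [Finset.sum_comm]
    refine Finset.sum_congr rfl fun y _ => Finset.sum_congr rfl fun x _ => ?_
    push_cast; ring
  have hT2 : ∀ l, ∑ j ∈ Θ, ‖T l j‖ ^ 2 ≤ 1600 * M ^ 2 * μ * (pg * py * (2 * C0 + 1)) := by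
    intro l
    refine LS2 (P := P) (X := X.ι) (Γ := G.ι × Y.ι) (fun x => Mw (X.wd x) 0 0) (fun x => Mw (X.wd x) 0 1)
      ?_ ?_ ?_ M hM ?_ ?_ X.p hX.p0 hX.p1.le μ hμ hμ0 (fun γ => G.p γ.1 * Y.p γ.2) ?_ (pg * py) ?_
      (by positivity) ?_ (fun γ => Mw (G.wd γ.1 ++ (L.wd l ++ Y.wd γ.2)) 0 0)
      (fun γ => Mw (G.wd γ.1 ++ (L.wd l ++ Y.wd γ.2)) 1 0) Θ hΘ C0 ?_
    · intro x x' h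
      simp only [Prod.mk.injEq] at h
      exact hX.inj (row_inj _ _ (hX.dg _) (hX.dg _) (hX.len _ _) h.1 h.2)
    · intro x; rw [← cont_eq]; exact hXP x
    · intro x; refine lt_of_le_of_lt (Mw_le01 (hX.dg x)) ?_; rw [← cont_eq]; exact hXP x
    · intro x; rw [← cont_eq]; exact hXM x
    · intro x
      refine le_trans ?_ (hXM x)
      rw [cont_eq]; exact_mod_cast Mw_le01 (hX.dg x)
    · intro γ; exact mul_nonneg (hG.p0 _) (hY.p0 _)
    · intro γ; exact mul_le_mul (hg _) (hy _) (hY.p0 _) hpg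
    · rw [Fintype.sum_prod_type, ← Finset.sum_mul_sum, hG.p1, hY.p1, one_mul]
    · intro j hj j' hj' γ γ' n1 n2 h1 h2
      obtain ⟨e1, e2, e3⟩ := hclose l j hj j' hj' γ.1 γ'.1 γ.2 γ'.2 n1 n2 h1 h2
      exact ⟨Prod.ext e1 e2, e3⟩
  calc _ = ∑ j ∈ Θ, ‖∑ l, (L.p l : ℂ) * T l j‖ ^ 2 := by
        refine Finset.sum_congr rfl fun j _ => ?_
        rw [hrep]
    _ ≤ ∑ j ∈ Θ, ∑ l, L.p l * ‖T l j‖ ^ 2 :=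
        Finset.sum_le_sum fun j _ => wjensen _ _ (fun i _ => hL.p0 i) hL.p1.le _
    _ = ∑ l, L.p l * ∑ j ∈ Θ, ‖T l j‖ ^ 2 := by
        rw [Finset.sum_comm]; simp only [Finset.mul_sum]
    _ ≤ ∑ l, L.p l * (1600 * M ^ 2 * μ * (pg * py * (2 * C0 + 1))) :=
        Finset.sum_le_sum fun l _ => mul_le_mul_of_nonneg_left (hT2 l) (hL.p0 l)
    _ = _ := by rw [← Finset.sum_mul, hL.p1, one_mul]

end Ens

namespace Ens

lemma base_rseg_add (B : ℕ → Ens) (i n m : ℕ) :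
    (rseg B i (n + m)).wd (rseg B i (n + m)).i0 =
      (rseg B (i + n) m).wd (rseg B (i + n) m).i0 ++ (rseg B i n).wd (rseg B i n).i0 := by
  induction m with
  | zero => simp [rseg, pure]
  | succ m ih =>
    have e1 : (rseg B i (n + (m + 1))).wd (rseg B i (n + (m + 1))).i0
      = (B (i + (n + m))).wd (B (i + (n + m))).i0 ++ (rseg B i (n + m)).wd (rseg B i (n + m)).i0 := rfl
    have e2 : (rseg B (i + n) (m + 1)).wd (rseg B (i + n) (m + 1)).i0
      = (B (i + n + m)).wd (B (i + n + m)).i0 ++ (rseg B (i + n) m).wd (rseg B (i + n) m).i0 := rfl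
    rw [e1, e2, ih, add_assoc, List.append_assoc]

/-- base word of the total -/
def Wb (B : ℕ → Ens) (f : List ℕ) (J J' : ℕ) : List ℕ :=
  (seg B 0 J).wd (seg B 0 J).i0 ++ (f ++ (rseg B 0 J').wd (rseg B 0 J').i0)

/-- exponential sum -/
def Sx (B : ℕ → Ens) (f : List ℕ) (J J' N j : ℕ) : ℂ :=
  (seg B 0 J).ex fun x => (rseg B 0 J').ex fun y =>
    ZMod.stdAddChar ((j : ZMod (N + 1)) * ((cont (x ++ (f ++ y)) : ℕ) : ZMod (N + 1)))

def cls (P : ℕ) (K Q : ℝ) (j : ℕ) : Prop := ∃ (a : ℤ) (q : ℕ), 0 < q ∧ IsCoprime a (q : ℤ) ∧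
  Q ≤ q ∧ (q : ℝ) < 2 * Q ∧ |(j : ℝ) * q - P * a| ≤ 2 * K * q ∧ (K = 1 ∨ K * q ≤ |(j : ℝ) * q - P * a|)

set_option maxHeartbeats 2000000 in
lemma MAJ {A : ℕ} {S : Finset ℕ} {C1 : ℝ} {B : ℕ → Ens} (hB : Blk A S C1 B) (f : List ℕ)
    (hf : dig A f) (hfS : ∀ d ∈ f, d ∈ S) (hfn : f ≠ []) (i r s n t N : ℕ) (hN : 1 ≤ N)
    (hW1 : 32 * (cont (Wb B f (i + (r + s)) (n + t)) : ℝ) ≤ N)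
    (hW2 : (N : ℝ) ≤ 128 * (A + 1) * cont (Wb B f (i + (r + s)) (n + t)))
    (K Q : ℝ) (hK : 1 ≤ K) (hQ : 1 ≤ Q)
    (hi : 33 * (K * Q ^ 2) ≤ (seg B 0 i).c)
    (hr : r = 0 ∨ (K ≠ 1 ∧ (seg B i r).c ^ 2 * (64 * (4096 * (A + 1)) ^ 2 * (A + 2) ^ 3) ≤ K))
    (hn : n = 0 ∨ 16 * (rseg B 0 n).c ^ 2 ≤ Q)
    (Θ : Finset ℕ) (hΘ : ∀ j ∈ Θ, j < N + 1) (hcl : ∀ j ∈ Θ, cls (N + 1) K Q j) :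
    ∑ j ∈ Θ, ‖Sx B f (i + (r + s)) (n + t) N j‖ ^ 2 ≤
      1600 * (2 * (seg B 0 i).c) ^ 2 * (2 ^ (5/3 : ℝ) * (seg B 0 i).c ^ (-(5/3) : ℝ)) *
      ((2 ^ (5/3 : ℝ) * (seg B i r).c ^ (-(5/3) : ℝ)) * (2 ^ (5/3 : ℝ) * (rseg B 0 n).c ^ (-(5/3) : ℝ))
        * (2 * ((4096 * (A + 1) : ℕ) : ℝ) + 1)) := by
  have oX := hB.seg_ok 0 i
  have oG := hB.seg_ok i r
  have oY := hB.rseg_ok 0 n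
  obtain ⟨L, hLdef⟩ : ∃ L : Ens, L = (seg B (i + r) s).mul ((pure f).mul (rseg B n t)) := ⟨_, rfl⟩
  have oL : Ok A S 4 L := by
    have := ok_mul (by norm_num) (hB.seg_ok (i + r) s) (ok_mul (by norm_num) (ok_pure hf hfS) (hB.rseg_ok n t))
    norm_num at this
    rw [hLdef]; exact this
  have hLn : ∀ l, L.wd l ≠ [] := by
    subst hLdef
    intro l
    change (seg B (i + r) s).wd _ ++ (f ++ _) ≠ []
    simp [hfn]
  obtain ⟨E, hE⟩ : ∃ E : Ens, E = (seg B 0 i).mul ((seg B i r).mul (L.mul (rseg B 0 n))) := ⟨_, rfl⟩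
  have oE : Ok A S 32 E := by
    have := ok_mul (by norm_num) oX (ok_mul (by norm_num) oG (ok_mul (by norm_num) oL oY))
    norm_num at this
    rw [hE]; exact this
  have hEc : E.c = cont (Wb B f (i + (r + s)) (n + t)) := by
    have e1 := base_seg_add B 0 i (r + s)
    have e2 := base_seg_add B (0 + i) r s
    have e3 := base_rseg_add B 0 n t
    rw [zero_add] at e1 e2 e3
    unfold Wb
    rw [e1, e2, e3]
    subst hE hLdef
    simp only [c, mul, pure, List.append_assoc]
  have hexp : ∀ j, Sx B f (i + (r + s)) (n + t) N j =
      (seg B 0 i).ex fun x => (seg B i r).ex fun g => L.ex fun l => (rseg B 0 n).ex fun y =>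
      (ZMod.stdAddChar ((j : ZMod (N + 1)) * ((cont (x ++ (g ++ (l ++ y))) : ℕ) : ZMod (N + 1))) : ℂ) := by
    intro j
    unfold Sx
    simp only [ex_seg_add, ex_rseg_add, hLdef, ex_mul, ex_pure, List.append_assoc, zero_add]
  simp only [hexp]
  set m := (seg B 0 i).c with hm
  have hm1 : 1 ≤ m := oX.c_pos
  -- size facts
  have hup : ∀ x g l y, (cont ((seg B 0 i).wd x ++ ((seg B i r).wd g ++ (L.wd l ++ (rseg B 0 n).wd y))) : ℝ) ≤ N := by
    intro x g l y
    have h := oE.le_c (hE ▸ (x, g, l, y))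
    subst hE
    rw [hEc] at h
    exact h.trans hW1
  have hlo : ∀ x g l y, (N : ℝ) ≤ 4096 * (A + 1) *
      cont ((seg B 0 i).wd x ++ ((seg B i r).wd g ++ (L.wd l ++ (rseg B 0 n).wd y))) := by
    intro x g l y
    have h := oE.c_le (hE ▸ (x, g, l, y))
    subst hE
    rw [hEc] at h
    change _ ≤ 32 * (cont ((seg B 0 i).wd x ++ ((seg B i r).wd g ++ (L.wd l ++ (rseg B 0 n).wd y))) : ℝ) at h
    calc (N : ℝ) ≤ 128 * (A + 1) * cont (Wb B f (i + (r + s)) (n + t)) := hW2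
      _ ≤ 128 * (A + 1) * (32 * (cont ((seg B 0 i).wd x ++ ((seg B i r).wd g ++ (L.wd l ++ (rseg B 0 n).wd y))) : ℝ)) := by gcongr
      _ = _ := by ring
  have dv : ∀ g l y, dig A ((seg B i r).wd g ++ (L.wd l ++ (rseg B 0 n).wd y)) := fun g l y =>
    dig_append (oG.dg g) (dig_append (oL.dg l) (oY.dg y))
  have vup : ∀ g l y, m * (cont ((seg B i r).wd g ++ (L.wd l ++ (rseg B 0 n).wd y)) : ℝ) ≤ N := by
    intro g l y
    refine le_trans ?_ (hup (seg B 0 i).i0 g l y)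
    rw [hm]; unfold c
    exact_mod_cast cont_app_ge _ _
  have vlo : ∀ g l y, (N : ℝ) ≤ 4096 * (A + 1) * ((2 * m) * (cont ((seg B i r).wd g ++ (L.wd l ++ (rseg B 0 n).wd y)) : ℝ)) := by
    intro g l y
    refine (hlo (seg B 0 i).i0 g l y).trans ?_
    gcongr
    rw [hm, mul_assoc]; unfold c
    exact_mod_cast cont_app_le (oX.dg _) (dv g l y)
  have hNr : (1 : ℝ) ≤ N := by exact_mod_cast hN
  have hA0 : (0 : ℝ) ≤ A := by positivity
  refine ens_ls (seg B 0 i) (seg B i r) L (rseg B 0 n) oX oG oL oY (2 * m) (by linarith)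
    (fun x => oX.le_c x) ?_ _ _ _ (at_le oX (by norm_num) (hB.seg_at _ _)) (at_le oG (by norm_num) (hB.seg_at _ _))
    (at_le oY (by norm_num) (hB.rseg_at _ _)) Θ hΘ _ ?_
  · intro x
    have h1 := hup x (seg B i r).i0 L.i0 (rseg B 0 n).i0
    have h2 := cont_app_ge ((seg B 0 i).wd x) ((seg B i r).wd (seg B i r).i0 ++ (L.wd L.i0 ++ (rseg B 0 n).wd (rseg B 0 n).i0))
    have h3 := cont_pos (dv (seg B i r).i0 L.i0 (rseg B 0 n).i0)
    have h4 : cont ((seg B 0 i).wd x) * 1 ≤ N := by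
      refine le_trans (le_trans (Nat.mul_le_mul_left _ h3) h2) ?_
      exact_mod_cast h1
    omega
  · intro l j hj j' hj' g g' y y' n1 n2 h1 h2
    obtain ⟨a, q, hq0, haq, hqQ, hq2, hb, hbK⟩ := hcl j hj
    obtain ⟨a', q', hq0', haq', hqQ', hq2', hb', hbK'⟩ := hcl j' hj'
    have e0 := vup g l y
    have e0' := vup g' l y'
    have f0 := vlo g l y
    have f0' := vlo g' l y'
    have d1 := dv g l y
    have d2 := dv g' l y'
    obtain ⟨u, hu⟩ : ∃ u, u = (seg B i r).wd g ++ (L.wd l ++ (rseg B 0 n).wd y) := ⟨_, rfl⟩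
    obtain ⟨u', hu'⟩ : ∃ u', u' = (seg B i r).wd g' ++ (L.wd l ++ (rseg B 0 n).wd y') := ⟨_, rfl⟩
    rw [← hu] at h1 h2 e0 f0 d1
    rw [← hu'] at h1 h2 e0' f0' d2
    have hP2 : ((N + 1 : ℕ) : ℝ) ≤ 2 * N := by push_cast; linarith
    have hPN : (N : ℝ) ≤ ((N + 1 : ℕ) : ℝ) := by push_cast; linarith
    have hPpos : (0 : ℝ) < ((N + 1 : ℕ) : ℝ) := by positivity
    obtain ⟨V, hV⟩ : ∃ V : ℝ, V = ((N + 1 : ℕ) : ℝ) / m := ⟨_, rfl⟩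
    have hVm : m * V = ((N + 1 : ℕ) : ℝ) := by rw [hV]; field_simp
    have uV : (Mw u 0 0 : ℝ) ≤ V := by
      rw [hV, le_div_iff₀ (by linarith), ← cont_eq]; linarith
    have uV' : (Mw u' 0 0 : ℝ) ≤ V := by
      rw [hV, le_div_iff₀ (by linarith), ← cont_eq]; linarith
    have uV1 : (Mw u 1 0 : ℝ) ≤ V := le_trans (by exact_mod_cast (Mw_le10 d1).2) uV
    have uV1' : (Mw u' 1 0 : ℝ) ≤ V := le_trans (by exact_mod_cast (Mw_le10 d2).2) uV'
    have hV0 : 0 ≤ V := le_trans (by positivity) uV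
    have hQ2 : (1 : ℝ) ≤ Q ^ 2 := by nlinarith
    obtain ⟨z1, z2, z3⟩ := major_arith (P := N + 1) (by omega) j j' (Mw u 0 0) (Mw u 1 0) (Mw u' 0 0) (Mw u' 1 0)
      q q' a a' (2 * m) V K Q (by linarith) (by linarith) (by linarith) hq0 hq0' haq haq'
      (Mw_cop10 u) (Mw_cop10 u') (Mw_pos d1) uV uV1 uV' uV1' hq2 hq2' hb hb' (by
        have : ((N + 1 : ℕ) : ℝ) / (5 * (2 * m)) = V / 10 := by rw [hV]; field_simp; norm_num
        rw [this, ← hVm]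
        have : V / 10 + 4 * K * V ≤ V * (33 / 8 * K) := by nlinarith
        calc 4 * Q ^ 2 * (V / 10 + 4 * K * V) ≤ 4 * Q ^ 2 * (V * (33 / 8 * K)) := by gcongr
          _ = (33 * (K * Q ^ 2)) / 2 * V := by ring
          _ ≤ m * V := by gcongr; nlinarith) n1 n2 h1 h2
    have hwd : |(Mw u 0 0 : ℝ) * Mw u' 1 0 - Mw u 1 0 * Mw u' 0 0| = ((|wdg u u'| : ℤ) : ℝ) := by
      unfold wdg; push_cast; rfl
    have hq0r : (0 : ℝ) < q := by exact_mod_cast hq0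
    have hgg : g = g' := by
      rcases hr with rfl | ⟨hK1, hR⟩
      · rfl
      · by_contra hne
        have hK' := hbK.resolve_left hK1
        rw [hwd] at z1
        have s1 := sep _ _ (L.wd l ++ (rseg B 0 n).wd y) (L.wd l ++ (rseg B 0 n).wd y') (oG.dg g) (oG.dg g')
          (dig_append (oL.dg l) (oY.dg y)) (dig_append (oL.dg l) (oY.dg y')) (by simp [hLn l]) (by simp [hLn l])
          (oG.len g g') (fun h => hne (oG.inj h))
        rw [← hu, ← hu'] at s1
        have s2 : (cont u : ℝ) * cont u' ≤ (A + 2) ^ 3 * (cont ((seg B i r).wd g) * cont ((seg B i r).wd g')) * ((|wdg u u'| : ℤ) : ℝ) := by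
          exact_mod_cast s1
        set W : ℝ := ((|wdg u u'| : ℤ) : ℝ)
        have hW0 : 0 ≤ W := by positivity
        set R := (seg B i r).c
        have c1 : (cont ((seg B i r).wd g) : ℝ) ≤ 2 * R := oG.le_c g
        have c2 : (cont ((seg B i r).wd g') : ℝ) ≤ 2 * R := oG.le_c g'
        have hR1 : 1 ≤ R := oG.c_pos
        have s3 : (cont u : ℝ) * cont u' ≤ (A + 2) ^ 3 * (4 * R ^ 2) * W := by
          refine s2.trans ?_
          calc _ ≤ ((A : ℝ) + 2) ^ 3 * ((2 * R) * (2 * R)) * W := by gcongr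
            _ = _ := by ring
        have z4 : K * W * (10 * m) ≤ 2 * V * ((N + 1 : ℕ) : ℝ) := by
          have : (K * q) * W * (5 * (2 * m)) ≤ 2 * V * ((N + 1 : ℕ) : ℝ) * q := le_trans (by gcongr) z1
          have : (K * W * (10 * m)) * q ≤ (2 * V * ((N + 1 : ℕ) : ℝ)) * q := by linarith
          exact le_of_mul_le_mul_right this hq0r
        rw [← hVm] at z4
        have z5 : K * W * 5 ≤ V ^ 2 := by
          have : (K * W * 5) * (2 * m) ≤ V ^ 2 * (2 * m) := by nlinarith
          exact le_of_mul_le_mul_right this (by linarith)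
        set CN : ℝ := 4096 * (A + 1) with hCN
        have hCNp : 0 < CN := by positivity
        have w1 : V ≤ 4 * CN * cont u := by
          rw [hV, div_le_iff₀ (by linarith)]; linarith
        have w2 : V ≤ 4 * CN * cont u' := by
          rw [hV, div_le_iff₀ (by linarith)]; linarith
        have hVp : 0 < V := by rw [hV]; positivity
        have w3 : V ^ 2 ≤ 16 * CN ^ 2 * (cont u * cont u') := by
          calc V ^ 2 = V * V := by ring
            _ ≤ (4 * CN * cont u) * (4 * CN * cont u') := by gcongr
            _ = _ := by ring
        have w4 : V ^ 2 ≤ (64 * CN ^ 2 * (A + 2) ^ 3 * R ^ 2) * W := by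
          calc V ^ 2 ≤ 16 * CN ^ 2 * (cont u * cont u') := w3
            _ ≤ 16 * CN ^ 2 * ((A + 2) ^ 3 * (4 * R ^ 2) * W) := by gcongr
            _ = _ := by ring
        have w5 : V ^ 2 ≤ K * W := by
          refine w4.trans ?_
          gcongr
          linarith
        have : 0 < V ^ 2 := by positivity
        linarith
    subst hgg
    have hyy : y = y' := by
      rcases hn with rfl | hH
      · rfl
      · have w : |wdg u u'| = |wdg ((rseg B 0 n).wd y) ((rseg B 0 n).wd y')| := by
          rw [hu, hu', wdg_app, wdg_app]
        set H := (rseg B 0 n).c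
        have c1 : (Mw ((rseg B 0 n).wd y) 0 0 : ℝ) ≤ 2 * H := by rw [← cont_eq]; exact oY.le_c y
        have c2 : (Mw ((rseg B 0 n).wd y') 0 0 : ℝ) ≤ 2 * H := by rw [← cont_eq]; exact oY.le_c y'
        have c1' : (Mw ((rseg B 0 n).wd y) 1 0 : ℝ) ≤ 2 * H :=
          le_trans (by exact_mod_cast (Mw_le10 (oY.dg y)).2) c1
        have c2' : (Mw ((rseg B 0 n).wd y') 1 0 : ℝ) ≤ 2 * H :=
          le_trans (by exact_mod_cast (Mw_le10 (oY.dg y')).2) c2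
        have hH1 : 1 ≤ H := oY.c_pos
        have hlt : ((|wdg ((rseg B 0 n).wd y) ((rseg B 0 n).wd y')| : ℤ) : ℝ) < q := by
          refine lt_of_le_of_lt (b := 4 * H ^ 2) ?_ (by nlinarith)
          unfold wdg
          push_cast
          have p1 : (Mw ((rseg B 0 n).wd y) 0 0 : ℝ) * Mw ((rseg B 0 n).wd y') 1 0 ≤ (2 * H) * (2 * H) := by gcongr
          have p2 : (Mw ((rseg B 0 n).wd y) 1 0 : ℝ) * Mw ((rseg B 0 n).wd y') 0 0 ≤ (2 * H) * (2 * H) := by gcongr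
          have p3 : (0 : ℝ) ≤ (Mw ((rseg B 0 n).wd y) 0 0 : ℝ) * Mw ((rseg B 0 n).wd y') 1 0 := by positivity
          have p4 : (0 : ℝ) ≤ (Mw ((rseg B 0 n).wd y) 1 0 : ℝ) * Mw ((rseg B 0 n).wd y') 0 0 := by positivity
          rw [abs_le]; constructor <;> linarith
        have hz : wdg u u' = 0 := by
          refine Int.eq_zero_of_abs_lt_dvd z2 ?_
          change |wdg u u'| < (q : ℤ)
          rw [w]
          exact_mod_cast hlt
        have hz' : wdg ((rseg B 0 n).wd y) ((rseg B 0 n).wd y') = 0 := by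
          rw [← abs_eq_zero, ← w, hz]; simp
        obtain ⟨k1, k2⟩ := cop_prop (Mw_cop10 _) (Mw_cop10 _) hz'
        exact oY.inj (col_inj _ _ (oY.dg y) (oY.dg y') (oY.len _ _) k1 k2)
    subst hyy
    refine ⟨rfl, rfl, ?_⟩
    have huu : u = u' := by rw [hu, hu']
    obtain ⟨e, l', he, hjj⟩ := z3 (by rw [huu]) (by rw [huu])
    refine ⟨e, l', ?_, hjj⟩
    rw [← cont_eq] at he
    have hc1 : (1 : ℝ) ≤ cont u := by exact_mod_cast cont_pos d1
    have hmu : 0 < m * cont u := by positivity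
    have : |(e : ℝ)| * (10 * (m * cont u)) ≤ (16384 * (A + 1)) * (m * cont u) := by linarith
    have h3 : |(e : ℝ)| ≤ ((4096 * (A + 1) : ℕ) : ℝ) := by
      push_cast
      have : (|(e : ℝ)| * 10) * (m * cont u) ≤ (16384 * (A + 1)) * (m * cont u) := by linarith
      have := le_of_mul_le_mul_right this hmu
      linarith
    have : |e| ≤ ((4096 * (A + 1) : ℕ) : ℤ) := by exact_mod_cast h3
    exact this

end Ens

namespace Ens

set_option maxHeartbeats 1000000 in
lemma MIN {A : ℕ} {S : Finset ℕ} {C1 : ℝ} {B : ℕ → Ens} (hB : Blk A S C1 B) (f : List ℕ)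
    (hf : dig A f) (hfS : ∀ d ∈ f, d ∈ S) (J J' N : ℕ) (hN : 1 ≤ N)
    (hW1 : 32 * (cont (Wb B f J J') : ℝ) ≤ N)
    (hW2 : (N : ℝ) ≤ 128 * (A + 1) * cont (Wb B f J J'))
    (hhm : (rseg B 0 J').c ≤ (seg B 0 J).c)
    (Θ : Finset ℕ) (hΘ : ∀ j ∈ Θ, j < N + 1)
    (hcl : ∀ j ∈ Θ, ∀ D : ℕ, 1 ≤ D → (D : ℝ) ≤ (2 * (rseg B 0 J').c) ^ 2 → ∀ m : ℤ,
      2 * (2 * (rseg B 0 J').c) * ((N + 1 : ℕ) : ℝ) <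
        |(((j : ℤ) * D - ((N + 1 : ℕ) : ℤ) * m : ℤ) : ℝ)| * (5 * (4 * ((seg B 0 J).c * cont f)))) :
    ∑ j ∈ Θ, ‖Sx B f J J' N j‖ ^ 2 ≤
      1600 * (4 * ((seg B 0 J).c * cont f)) ^ 2 * (2 ^ (5/3 : ℝ) * (seg B 0 J).c ^ (-(5/3) : ℝ)) *
      (1 * (2 ^ (5/3 : ℝ) * (rseg B 0 J').c ^ (-(5/3) : ℝ)) * (2 * ((4096 * (A + 1) : ℕ) : ℝ) + 1)) := by
  have oX := hB.seg_ok 0 J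
  have oY := hB.rseg_ok 0 J'
  have of : Ok A S 1 (pure f) := ok_pure hf hfS
  have o1 : Ok A S 1 (pure []) := ok_pure (dig_nil A) (by simp)
  have oXf : Ok A S 2 ((seg B 0 J).mul (pure f)) := by simpa using ok_mul (by norm_num) oX of
  have hexp : ∀ j, Sx B f J J' N j =
      ((seg B 0 J).mul (pure f)).ex fun x => (pure []).ex fun g => (pure []).ex fun l => (rseg B 0 J').ex fun y =>
      (ZMod.stdAddChar ((j : ZMod (N + 1)) * ((cont (x ++ (g ++ (l ++ y))) : ℕ) : ZMod (N + 1))) : ℂ) := by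
    intro j
    unfold Sx
    simp only [ex_mul, ex_pure, List.append_assoc, List.nil_append]
  simp only [hexp]
  have cXf : ((seg B 0 J).mul (pure f)).c ≤ 2 * ((seg B 0 J).c * cont f) := c_mul_le oX of
  have cfpos : (1 : ℝ) ≤ cont f := by exact_mod_cast cont_pos hf
  have hm1 : 1 ≤ (seg B 0 J).c := oX.c_pos
  have hh1 : 1 ≤ (rseg B 0 J').c := oY.c_pos
  have hWeq : (cont (Wb B f J J') : ℝ) = (((seg B 0 J).mul (pure f)).mul (rseg B 0 J')).c := by
    unfold Wb c
    have : (((seg B 0 J).mul (pure f)).mul (rseg B 0 J')).wd (((seg B 0 J).mul (pure f)).mul (rseg B 0 J')).i0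
      = ((seg B 0 J).wd (seg B 0 J).i0 ++ f) ++ (rseg B 0 J').wd (rseg B 0 J').i0 := rfl
    rw [this, List.append_assoc]
  have hW3 := c_mul_ge ((seg B 0 J).mul (pure f)) (rseg B 0 J')
  have hW4 := c_mul_le oXf oY
  rw [← hWeq] at hW3 hW4
  set m := (seg B 0 J).c
  set h := (rseg B 0 J').c
  set φ : ℝ := (cont f : ℝ)
  set xc := ((seg B 0 J).mul (pure f)).c
  have hxc1 : 1 ≤ xc := oXf.c_pos
  have hmφ : m ≤ m * φ := by nlinarith
  have hNup : (N : ℝ) ≤ 512 * (A + 1) * (m * φ * h) := by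
    calc (N : ℝ) ≤ 128 * (A + 1) * cont (Wb B f J J') := hW2
      _ ≤ 128 * (A + 1) * (2 * ((2 * (m * φ)) * h)) := by
          gcongr
          refine hW4.trans ?_
          gcongr
      _ = _ := by ring
  refine ens_ls ((seg B 0 J).mul (pure f)) (pure []) (pure []) (rseg B 0 J') oXf o1 o1 oY (4 * (m * φ)) (by nlinarith)
    ?_ ?_ _ _ _ ?_ (fun _ => le_refl _) (at_le oY (by norm_num) (hB.rseg_at _ _)) Θ hΘ _ ?_
  · intro x
    have := oXf.le_c x
    linarith
  · intro x
    have h1 := oXf.le_c x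
    have : (cont (((seg B 0 J).mul (pure f)).wd x) : ℝ) ≤ N := by nlinarith
    have : cont (((seg B 0 J).mul (pure f)).wd x) ≤ N := by exact_mod_cast this
    omega
  · intro x
    have : ((seg B 0 J).mul (pure f)).p x = (seg B 0 J).p x.1 * 1 := rfl
    rw [this, mul_one]
    exact at_le oX (by norm_num) (hB.seg_at _ _) x.1
  · intro l j hj j' hj' g g' y y' n1 n2 h1 h2
    refine ⟨rfl, ?_⟩
    change |(((j : ℤ) * Mw ((rseg B 0 J').wd y) 0 0
        - j' * Mw ((rseg B 0 J').wd y') 0 0 - ((N + 1 : ℕ) : ℤ) * n1 : ℤ) : ℝ)| * (5 * (4 * (m * φ))) ≤ _ at h1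
    change |(((j : ℤ) * Mw ((rseg B 0 J').wd y) 1 0
        - j' * Mw ((rseg B 0 J').wd y') 1 0 - ((N + 1 : ℕ) : ℤ) * n2 : ℤ) : ℝ)| * (5 * (4 * (m * φ))) ≤ _ at h2
    have c1 : (Mw ((rseg B 0 J').wd y) 0 0 : ℝ) ≤ 2 * h := by rw [← cont_eq]; exact oY.le_c y
    have c2 : (Mw ((rseg B 0 J').wd y') 0 0 : ℝ) ≤ 2 * h := by rw [← cont_eq]; exact oY.le_c y'
    have c1' : (Mw ((rseg B 0 J').wd y) 1 0 : ℝ) ≤ 2 * h :=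
      le_trans (by exact_mod_cast (Mw_le10 (oY.dg y)).2) c1
    have c2' : (Mw ((rseg B 0 J').wd y') 1 0 : ℝ) ≤ 2 * h :=
      le_trans (by exact_mod_cast (Mw_le10 (oY.dg y')).2) c2
    have c3 : h ≤ 2 * (cont ((rseg B 0 J').wd y) : ℝ) := oY.c_le y
    obtain ⟨k1, k2, e, l', he, hjj⟩ := minor_arith (P := N + 1) (by omega) j j' _ _ _ _ (4 * (m * φ)) (2 * h) (by positivity)
      (Mw_cop10 ((rseg B 0 J').wd y)) (Mw_cop10 ((rseg B 0 J').wd y')) (Mw_pos (oY.dg y)) c1 c1' c2 c2'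
      (by linarith) (hcl j hj) n1 n2 h1 h2
    refine ⟨oY.inj (col_inj _ _ (oY.dg y) (oY.dg y') (oY.len _ _) k1 k2), e, l', ?_, hjj⟩
    rw [← cont_eq] at he
    have hNr : (1 : ℝ) ≤ N := by exact_mod_cast hN
    have hpos : 0 < m * φ * h := by positivity
    have e1 : |(e : ℝ)| * (10 * (m * φ * h)) ≤ ((N + 1 : ℕ) : ℝ) := by
      refine le_trans ?_ he
      refine mul_le_mul_of_nonneg_left ?_ (abs_nonneg _)
      have : 0 ≤ m * φ := by positivity
      nlinarith [mul_le_mul_of_nonneg_left c3 this]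
    have e2 : (|(e : ℝ)| * 10) * (m * φ * h) ≤ (1024 * (A + 1)) * (m * φ * h) := by
      push_cast at e1
      linarith
    have e3 := le_of_mul_le_mul_right e2 hpos
    have h3 : |(e : ℝ)| ≤ ((4096 * (A + 1) : ℕ) : ℝ) := by
      push_cast
      have : (0 : ℝ) ≤ A := by positivity
      linarith
    have : |e| ≤ ((4096 * (A + 1) : ℕ) : ℤ) := by exact_mod_cast h3
    exact this

end Ens

lemma sel (f : ℕ → ℝ) (h0 : f 0 = 0) (h : ∀ n, f n + Real.log 2 ≤ f (n + 1)) (T : ℝ) :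
    ∃ n, (n = 0 ∨ f n ≤ T) ∧ T < f (n + 1) := by
  have hl := Real.log_two_gt_d9
  have hb : ∀ n : ℕ, (n : ℝ) * (1/2) ≤ f n := by
    intro n
    induction n with
    | zero => simp [h0]
    | succ n ih => have := h n; push_cast; linarith
  have hex : ∃ n : ℕ, T < f (n + 1) := by
    obtain ⟨n, hn⟩ := exists_nat_gt (2 * T)
    refine ⟨n, ?_⟩
    have := hb (n + 1)
    push_cast at this
    linarith
  classical
  refine ⟨Nat.find hex, ?_, Nat.find_spec hex⟩
  rcases Nat.eq_zero_or_pos (Nat.find hex) with h1 | h1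
  · exact Or.inl h1
  · right
    have := Nat.find_min hex (m := Nat.find hex - 1) (by omega)
    rw [Nat.sub_add_cancel h1] at this
    exact not_lt.mp this

namespace Ens

def lg (E : Ens) : ℝ := Real.log E.c

lemma Ok.lg_nonneg {A : ℕ} {S : Finset ℕ} {κ : ℝ} {E : Ens} (hE : Ok A S κ E) : 0 ≤ E.lg :=
  Real.log_nonneg hE.c_pos

lemma lg_mul_ge {A : ℕ} {S : Finset ℕ} {κ κ' : ℝ} {E F : Ens}
    (hE : Ok A S κ E) (hF : Ok A S κ' F) : E.lg + F.lg ≤ (E.mul F).lg := by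
  have h1 := hE.c_pos
  have h2 := hF.c_pos
  unfold lg
  rw [← Real.log_mul (by positivity) (by positivity)]
  exact Real.log_le_log (by positivity) (c_mul_ge E F)

lemma lg_mul_le {A : ℕ} {S : Finset ℕ} {κ κ' : ℝ} {E F : Ens}
    (hE : Ok A S κ E) (hF : Ok A S κ' F) : (E.mul F).lg ≤ Real.log 2 + E.lg + F.lg := by
  have h1 := hE.c_pos
  have h2 := hF.c_pos
  unfold lg
  rw [add_assoc, ← Real.log_mul (by positivity) (by positivity), ← Real.log_mul (by positivity) (by positivity)]
  exact Real.log_le_log (lt_of_lt_of_le (by positivity) (c_mul_ge E F)) (c_mul_le hE hF)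

variable {B : ℕ → Ens} {A : ℕ} {S : Finset ℕ} {C1 : ℝ}

lemma lg_seg0 (i : ℕ) : (seg B i 0).lg = 0 := by simp [lg, c, seg, pure, cont]
lemma lg_rseg0 (i : ℕ) : (rseg B i 0).lg = 0 := by simp [lg, c, rseg, pure, cont]

lemma Blk.lgB (h : Blk A S C1 B) (i : ℕ) : (i + 1) * Real.log 2 ≤ (B i).lg := by
  have := Real.log_le_log (by positivity) (h.lb i)
  rw [Real.log_pow] at this
  push_cast at this
  exact this

lemma Blk.lgB' (h : Blk A S C1 B) (i : ℕ) : (B i).lg ≤ (i + 1) * Real.log C1 := by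
  have := Real.log_le_log (by linarith [(h.ok i).c_pos]) (h.ub i)
  rw [Real.log_pow] at this
  push_cast at this
  exact this

lemma Blk.lgseg_ge (h : Blk A S C1 B) (i n : ℕ) : (seg B i n).lg + (B (i + n)).lg ≤ (seg B i (n + 1)).lg :=
  lg_mul_ge (h.seg_ok i n) (h.ok _)
lemma Blk.lgseg_le (h : Blk A S C1 B) (i n : ℕ) :
    (seg B i (n + 1)).lg ≤ Real.log 2 + (seg B i n).lg + (B (i + n)).lg :=
  lg_mul_le (h.seg_ok i n) (h.ok _)
lemma Blk.lgrseg_ge (h : Blk A S C1 B) (i n : ℕ) : (rseg B i n).lg + (B (i + n)).lg ≤ (rseg B i (n + 1)).lg := by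
  have := lg_mul_ge (h.ok (i + n)) (h.rseg_ok i n)
  change _ ≤ ((B (i + n)).mul (rseg B i n)).lg
  linarith
lemma Blk.lgrseg_le (h : Blk A S C1 B) (i n : ℕ) :
    (rseg B i (n + 1)).lg ≤ Real.log 2 + (rseg B i n).lg + (B (i + n)).lg := by
  have := lg_mul_le (h.ok (i + n)) (h.rseg_ok i n)
  change ((B (i + n)).mul (rseg B i n)).lg ≤ _
  linarith

lemma Blk.lgseg_add (h : Blk A S C1 B) (i r : ℕ) :
    (seg B 0 (i + r)).lg ≤ Real.log 2 + (seg B 0 i).lg + (seg B i r).lg := by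
  have e := base_seg_add B 0 i r
  have := lg_mul_le (h.seg_ok 0 i) (h.seg_ok i r)
  rw [zero_add] at e
  have e2 : (seg B 0 (i + r)).lg = ((seg B 0 i).mul (seg B i r)).lg := by
    unfold lg c
    rw [e]; rfl
  rw [e2]; exact this

lemma Blk.step (h : Blk A S C1 B) (i n : ℕ) : (seg B i n).lg + Real.log 2 ≤ (seg B i (n + 1)).lg := by
  have h1 := h.lgseg_ge i n
  have h2 := h.lgB (i + n)
  have h3 : (0 : ℝ) ≤ ((i + n : ℕ) : ℝ) * Real.log 2 := by positivity
  linarith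

lemma Blk.rstep (h : Blk A S C1 B) (i n : ℕ) : (rseg B i n).lg + Real.log 2 ≤ (rseg B i (n + 1)).lg := by
  have h1 := h.lgrseg_ge i n
  have h2 := h.lgB (i + n)
  have h3 : (0 : ℝ) ≤ ((i + n : ℕ) : ℝ) * Real.log 2 := by positivity
  linarith

lemma Blk.seg_mono (h : Blk A S C1 B) : Monotone fun n => (seg B 0 n).lg :=
  monotone_nat_of_le_succ fun n => by
    have := h.step 0 n
    have := Real.log_two_gt_d9
    linarith
lemma Blk.rseg_mono (h : Blk A S C1 B) : Monotone fun n => (rseg B 0 n).lg :=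
  monotone_nat_of_le_succ fun n => by
    have := h.rstep 0 n
    have := Real.log_two_gt_d9
    linarith

lemma Blk.seg_sq (h : Blk A S C1 B) (n : ℕ) : (n : ℝ) ^ 2 / 4 ≤ (seg B 0 n).lg := by
  have hl := Real.log_two_gt_d9
  induction n with
  | zero => simp [lg_seg0]
  | succ n ih =>
    have h1 := h.lgseg_ge 0 n
    have h2 := h.lgB (0 + n)
    have h3 : (0 : ℝ) ≤ n := by positivity
    rw [zero_add] at h1 h2
    push_cast
    nlinarith
lemma Blk.rseg_sq (h : Blk A S C1 B) (n : ℕ) : (n : ℝ) ^ 2 / 4 ≤ (rseg B 0 n).lg := by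
  have hl := Real.log_two_gt_d9
  induction n with
  | zero => simp [lg_rseg0]
  | succ n ih =>
    have h1 := h.lgrseg_ge 0 n
    have h2 := h.lgB (0 + n)
    have h3 : (0 : ℝ) ≤ n := by positivity
    rw [zero_add] at h1 h2
    push_cast
    nlinarith

lemma Blk.growth (h : Blk A S C1 B) : ∃ C : ℝ, 0 ≤ C ∧ ∀ n, (B n).lg ≤ C + 1/1000 * (seg B 0 n).lg ∧
    (B n).lg ≤ C + 1/1000 * (rseg B 0 n).lg := by
  set L := Real.log C1 with hL
  have hL0 : 0 ≤ L := by
    have h1 := h.lgB 0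
    have h2 := h.lgB' 0
    have := Real.log_two_gt_d9
    simp at h1 h2
    linarith
  refine ⟨L + 1000 * L ^ 2, by positivity, fun n => ?_⟩
  have h1 := h.lgB' n
  have h2 := h.seg_sq n
  have h3 := h.rseg_sq n
  have := sq_nonneg ((n : ℝ) - 2000 * L)
  constructor <;> nlinarith

lemma Blk.scales (h : Blk A S C1 B) : ∃ C : ℝ, 0 ≤ C ∧
    (∀ T : ℝ, 0 ≤ T → ∃ i, T ≤ (seg B 0 i).lg ∧ (seg B 0 i).lg ≤ C + 1001/1000 * T) ∧
    (∀ T : ℝ, ∃ n, (n = 0 ∨ (rseg B 0 n).lg ≤ T) ∧ T ≤ C + 1001/1000 * (rseg B 0 n).lg) ∧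
    (∀ T : ℝ, ∀ i, ∃ r, (r = 0 ∨ (seg B i r).lg ≤ T) ∧
      T ≤ C + (seg B i r).lg + 1/1000 * ((seg B 0 i).lg + (seg B i r).lg)) ∧
    (∀ T : ℝ, ∃ n, (n = 0 ∨ (seg B 0 n).lg ≤ T) ∧ T < (seg B 0 (n + 1)).lg ∧
      T ≤ C + 1001/1000 * (seg B 0 n).lg) := by
  obtain ⟨C, hC, hg⟩ := h.growth
  have hl := Real.log_two_gt_d9
  have hl' := Real.log_two_lt_d9
  refine ⟨C + 2, by positivity, ?_, ?_, ?_, ?_⟩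
  · intro T hT
    obtain ⟨n, h1, h2⟩ := sel (fun n => (seg B 0 n).lg) (lg_seg0 0) (h.step 0) T
    have h1' : (seg B 0 n).lg ≤ T := by
      rcases h1 with rfl | h1
      · simpa [lg_seg0] using hT
      · exact h1
    refine ⟨n + 1, h2.le, ?_⟩
    have h3 := h.lgseg_le 0 n
    have h4 := (hg n).1
    rw [zero_add] at h3
    linarith
  · intro T
    obtain ⟨n, h1, h2⟩ := sel (fun n => (rseg B 0 n).lg) (lg_rseg0 0) (h.rstep 0) T
    refine ⟨n, h1, ?_⟩
    have h3 := h.lgrseg_le 0 n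
    have h4 := (hg n).2
    rw [zero_add] at h3
    linarith
  · intro T i
    obtain ⟨n, h1, h2⟩ := sel (fun n => (seg B i n).lg) (lg_seg0 i) (h.step i) T
    refine ⟨n, h1, ?_⟩
    have h3 := h.lgseg_le i n
    have h4 := (hg (i + n)).1
    have h5 := h.lgseg_add i n
    linarith
  · intro T
    obtain ⟨n, h1, h2⟩ := sel (fun n => (seg B 0 n).lg) (lg_seg0 0) (h.step 0) T
    refine ⟨n, h1, h2, ?_⟩
    have h3 := h.lgseg_le 0 n
    have h4 := (hg n).1
    rw [zero_add] at h3
    linarith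

end Ens

namespace Ens

lemma filler {A a : ℕ} (ha : 2 ≤ a) (haA : a ≤ A) (F : ℝ) (hF : 0 ≤ F) :
    ∃ f : List ℕ, f ≠ [] ∧ (∀ d ∈ f, d = a) ∧ F < Real.log (cont f) ∧
      Real.log (cont f) ≤ F + Real.log (A + 1) := by
  have hd : ∀ t, dig A (List.replicate t a) := by
    intro t d hd
    rw [List.eq_of_mem_replicate hd]
    omega
  have hp : ∀ t, (1 : ℝ) ≤ cont (List.replicate t a) := fun t => by exact_mod_cast cont_pos (hd t)
  have hst : ∀ t, 2 * cont (List.replicate t a) ≤ cont (List.replicate (t + 1) a) := by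
    intro t
    have := cont_app_ge [a] (List.replicate t a)
    simp only [List.singleton_append, cont] at this
    rw [List.replicate_succ]
    exact le_trans (Nat.mul_le_mul_right _ ha) this
  have hst2 : ∀ t, cont (List.replicate (t + 1) a) ≤ (A + 1) * cont (List.replicate t a) := by
    intro t
    cases t with
    | zero => simp [cont]; omega
    | succ t =>
      have h1 := hst t
      have e : cont (List.replicate (t + 1 + 1) a)
        = a * cont (List.replicate (t + 1) a) + cont (List.replicate t a) := by
        simp only [List.replicate_succ, cont]
      rw [e]
      have := Nat.mul_le_mul_right (cont (List.replicate (t + 1) a)) haA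
      nlinarith
  obtain ⟨n, h1, h2⟩ := sel (fun t => Real.log (cont (List.replicate t a))) (by simp [cont]) (by
    intro t
    have h0 := hp t
    have := hst t
    rw [add_comm, ← Real.log_mul (by norm_num) (by positivity)]
    exact Real.log_le_log (by positivity) (by exact_mod_cast this)) F
  refine ⟨List.replicate (n + 1) a, by simp, fun d hd => List.eq_of_mem_replicate hd, h2, ?_⟩
  have h3 : Real.log (cont (List.replicate n a)) ≤ F := by
    rcases h1 with rfl | h1
    · simpa [cont] using hF
    · exact h1
  have h0 := hp n
  have h4 : Real.log (cont (List.replicate (n + 1) a)) ≤ Real.log ((A + 1) * cont (List.replicate n a)) :=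
    Real.log_le_log (by linarith [hp (n + 1)]) (by exact_mod_cast hst2 n)
  rw [Real.log_mul (by positivity) (by positivity)] at h4
  linarith

structure Cfg (B : ℕ → Ens) (A : ℕ) (S : Finset ℕ) (C : ℝ) (N J J' : ℕ) (f : List ℕ) : Prop where
  hN : 1 ≤ N
  hf : dig A f
  hfS : ∀ d ∈ f, d ∈ S
  hfn : f ≠ []
  hW1 : 32 * (cont (Wb B f J J') : ℝ) ≤ N
  hW2 : (N : ℝ) ≤ 128 * (A + 1) * cont (Wb B f J J')
  h1 : (rseg B 0 J').lg ≤ 18/100 * Real.log N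
  h2 : 18/100 * Real.log N ≤ C + 1001/1000 * (rseg B 0 J').lg
  h3 : (seg B 0 J).lg ≤ Real.log N - (rseg B 0 J').lg
  h4 : Real.log N - (rseg B 0 J').lg ≤ C + (seg B 0 (J + 1)).lg
  h5 : Real.log (cont f) ≤ C + 1/1000 * (seg B 0 J).lg
  h6 : ((N + 1 : ℕ) : ℝ) ≤ C * ((seg B 0 J).c * cont f * (rseg B 0 J').c)
  h7 : Real.log N - (rseg B 0 J').lg ≤ C + 1001/1000 * (seg B 0 J).lg

variable {B : ℕ → Ens} {A : ℕ} {S : Finset ℕ} {C1 : ℝ}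

lemma Blk.cfg (h : Blk A S C1 B) {a : ℕ} (ha : 2 ≤ a) (haA : a ≤ A) (haS : a ∈ S) :
    ∃ C : ℝ, 0 ≤ C ∧ ∀ N : ℕ, 1 ≤ N → C ≤ Real.log N → ∃ J J' f, Cfg B A S C N J J' f := by
  obtain ⟨C, hC, -, hY, -, hX⟩ := h.scales
  have hA1 : (0 : ℝ) < A + 1 := by positivity
  have hlA : 0 ≤ Real.log (128 * (A + 1)) := Real.log_nonneg (by nlinarith [(Nat.cast_nonneg A : (0 : ℝ) ≤ A)])
  have hlA' : 0 ≤ Real.log (A + 1) := Real.log_nonneg (by linarith [(Nat.cast_nonneg A : (0 : ℝ) ≤ A)])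
  refine ⟨2 * C + 2 * Real.log (128 * (A + 1)) + Real.log (A + 1) + 1024 * (A + 1), by positivity, ?_⟩
  intro N hN hCN
  have hAN : (0 : ℝ) ≤ A := Nat.cast_nonneg A
  obtain ⟨J', hJ1, hJ2⟩ := hY (18/100 * Real.log N)
  have hlh : (rseg B 0 J').lg ≤ 18/100 * Real.log N := by
    rcases hJ1 with rfl | h1
    · rw [lg_rseg0]; linarith
    · exact h1
  obtain ⟨TX, hTX⟩ : ∃ TX, TX = Real.log N - (rseg B 0 J').lg - Real.log (128 * (A + 1)) := ⟨_, rfl⟩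
  have hTX0 : 0 ≤ TX := by linarith
  obtain ⟨J, hK1, hK2, hK3⟩ := hX TX
  have hlm : (seg B 0 J).lg ≤ TX := by
    rcases hK1 with rfl | h1
    · rw [lg_seg0]; exact hTX0
    · exact h1
  obtain ⟨f, f1, f2, f3, f4⟩ := filler (A := A) ha haA (TX - (seg B 0 J).lg) (by linarith)
  have hfd : dig A f := fun d hd => by rw [f2 d hd]; omega
  have hφ : (1 : ℝ) ≤ cont f := by exact_mod_cast cont_pos hfd
  have hm := (h.seg_ok 0 J).c_pos
  have hh := (h.rseg_ok 0 J').c_pos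
  have hNr : (1 : ℝ) ≤ N := by exact_mod_cast hN
  have hWl : (seg B 0 J).c * (cont f * (rseg B 0 J').c) ≤ cont (Wb B f J J') := by
    unfold Wb
    have e1 := cont_app_ge f ((rseg B 0 J').wd (rseg B 0 J').i0)
    have e2 := cont_app_ge ((seg B 0 J).wd (seg B 0 J).i0) (f ++ ((rseg B 0 J').wd (rseg B 0 J').i0))
    have := le_trans (Nat.mul_le_mul_left _ e1) e2
    unfold c
    exact_mod_cast this
  have hWu : (cont (Wb B f J J') : ℝ) ≤ 4 * ((seg B 0 J).c * (cont f * (rseg B 0 J').c)) := by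
    unfold Wb
    have dm := (h.seg_ok 0 J).dg (seg B 0 J).i0
    have dh := (h.rseg_ok 0 J').dg (rseg B 0 J').i0
    have e1 := cont_app_le hfd dh
    have e2 := cont_app_le dm (dig_append hfd dh)
    have : cont ((seg B 0 J).wd (seg B 0 J).i0 ++ (f ++ (rseg B 0 J').wd (rseg B 0 J').i0))
      ≤ 4 * (cont ((seg B 0 J).wd (seg B 0 J).i0) * (cont f * cont ((rseg B 0 J').wd (rseg B 0 J').i0))) := by
      refine e2.trans ?_
      have := Nat.mul_le_mul_left (cont ((seg B 0 J).wd (seg B 0 J).i0)) e1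
      nlinarith
    unfold c
    exact_mod_cast this
  set m := (seg B 0 J).c
  set φ := (cont f : ℝ)
  set hc := (rseg B 0 J').c
  have hlog : Real.log (m * (φ * hc)) = (seg B 0 J).lg + (Real.log φ + (rseg B 0 J').lg) := by
    rw [Real.log_mul (by positivity) (by positivity), Real.log_mul (by positivity) (by positivity)]; rfl
  have hsp : Real.log (128 * (A + 1)) = Real.log 128 + Real.log (A + 1) :=
    Real.log_mul (by norm_num) (by positivity)
  have k1 : 128 * (m * (φ * hc)) ≤ N := by
    rw [← Real.log_le_log_iff (by positivity) (by linarith), Real.log_mul (by norm_num) (by positivity), hlog]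
    linarith
  have k2 : (N : ℝ) ≤ 128 * (A + 1) * (m * (φ * hc)) := by
    rw [← Real.log_le_log_iff (by linarith) (by positivity), Real.log_mul (by positivity) (by positivity), hlog]
    linarith
  refine ⟨J, J', f, hN, hfd, fun d hd => by rw [f2 d hd]; exact haS, f1, by linarith, ?_, hlh, by linarith,
    by linarith, by linarith, by linarith, ?_, by linarith⟩
  · exact k2.trans (by gcongr)
  · push_cast
    have : (0 : ℝ) ≤ m * (φ * hc) := by positivity
    have k3 : (N : ℝ) + 1 ≤ 1024 * (A + 1) * (m * (φ * hc)) := by nlinarith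
    have k4 : 0 ≤ (2 * C + 2 * Real.log (128 * (A + 1)) + Real.log (A + 1)) * (m * (φ * hc)) := by positivity
    calc _ ≤ _ := k3
      _ ≤ 1024 * (A + 1) * (m * (φ * hc)) + (2 * C + 2 * Real.log (128 * (A + 1)) + Real.log (A + 1)) * (m * (φ * hc)) := by linarith
      _ = _ := by ring

lemma Blk.cexp (h : Blk A S C1 B) (i n : ℕ) : (seg B i n).c = Real.exp (seg B i n).lg :=
  (Real.exp_log (by linarith [(h.seg_ok i n).c_pos])).symm
lemma Blk.rcexp (h : Blk A S C1 B) (i n : ℕ) : (rseg B i n).c = Real.exp (rseg B i n).lg :=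
  (Real.exp_log (by linarith [(h.rseg_ok i n).c_pos])).symm

lemma Blk.min1 (h : Blk A S C1 B) {C : ℝ} (hC : 0 ≤ C) : ∃ C4 L0 : ℝ, ∀ N J J' f, Cfg B A S C N J J' f →
    L0 ≤ Real.log N → ∀ Θ : Finset ℕ, (∀ j ∈ Θ, j < N + 1) →
    (∀ j ∈ Θ, ∀ D : ℕ, 1 ≤ D → (D : ℝ) ≤ (2 * (rseg B 0 J').c) ^ 2 → ∀ m : ℤ,
      2 * (2 * (rseg B 0 J').c) * ((N + 1 : ℕ) : ℝ) <
        |(((j : ℤ) * D - ((N + 1 : ℕ) : ℤ) * m : ℤ) : ℝ)| * (5 * (4 * ((seg B 0 J).c * cont f)))) →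
    ∑ j ∈ Θ, ‖Sx B f J J' N j‖ ^ 2 ≤ C4 := by
  obtain ⟨Z, hZ⟩ : ∃ Z : ℝ, Z = 1600 * 16 * 2 ^ (5/3 : ℝ) * 2 ^ (5/3 : ℝ) * (2 * ((4096 * (A + 1) : ℕ) : ℝ) + 1) := ⟨_, rfl⟩
  have hZ0 : 0 ≤ Z := by rw [hZ]; positivity
  refine ⟨Z * Real.exp (10 * C), 10 * C, ?_⟩
  intro N J J' f g hL Θ hΘ hcl
  have hφ : (1 : ℝ) ≤ cont f := by exact_mod_cast cont_pos g.hf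
  have h1 := g.h1
  have h2 := g.h2
  have h3 := g.h3
  have h5 := g.h5
  have h7 := g.h7
  refine (MIN h f g.hf g.hfS J J' N g.hN g.hW1 g.hW2 ?_ Θ hΘ hcl).trans ?_
  · rw [h.cexp, h.rcexp]
    refine Real.exp_le_exp.mpr ?_
    linarith
  · have e : (cont f : ℝ) = Real.exp (Real.log (cont f)) := (Real.exp_log (by linarith)).symm
    rw [h.cexp, h.rcexp, e, ← Real.exp_mul, ← Real.exp_mul]
    have e2 : 1600 * (4 * (Real.exp (seg B 0 J).lg * Real.exp (Real.log (cont f)))) ^ 2 *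
        (2 ^ (5/3 : ℝ) * Real.exp ((seg B 0 J).lg * (-(5/3)))) *
        (1 * (2 ^ (5/3 : ℝ) * Real.exp ((rseg B 0 J').lg * (-(5/3)))) * (2 * ((4096 * (A + 1) : ℕ) : ℝ) + 1))
        = Z * Real.exp (2 * (seg B 0 J).lg + 2 * Real.log (cont f) + (seg B 0 J).lg * (-(5/3)) + (rseg B 0 J').lg * (-(5/3))) := by
      rw [Real.exp_add, Real.exp_add, Real.exp_add, two_mul (seg B 0 J).lg, two_mul (Real.log (cont f)), Real.exp_add, Real.exp_add, hZ]
      ring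
    rw [e2]
    refine mul_le_mul_of_nonneg_left (Real.exp_le_exp.mpr ?_) hZ0
    linarith

lemma Blk.maj1 (h : Blk A S C1 B) {C C3 : ℝ} (hC : 0 ≤ C) (hC3 : 1 ≤ C3) : ∃ C4 L0 : ℝ, ∀ N J J' f, Cfg B A S C N J J' f →
    L0 ≤ Real.log N → ∀ Θ : Finset ℕ, (∀ j ∈ Θ, j < N + 1) → ∀ K Q : ℝ, 1 ≤ K → 1 ≤ Q →
    Q ≤ 4 * (rseg B 0 J').c ^ 2 → K * Q ≤ C3 * (rseg B 0 J').c ^ 2 →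
    (∀ j ∈ Θ, cls (N + 1) K Q j) →
    ∑ j ∈ Θ, ‖Sx B f J J' N j‖ ^ 2 ≤ C4 * Real.exp (-(Real.log K + Real.log Q) / 10) := by
  obtain ⟨C5, hC5, hX, hY, hG, -⟩ := h.scales
  obtain ⟨Z, hZ⟩ : ∃ Z : ℝ, Z = 1600 * 4 * 2 ^ (5/3 : ℝ) * 2 ^ (5/3 : ℝ) * 2 ^ (5/3 : ℝ) * (2 * ((4096 * (A + 1) : ℕ) : ℝ) + 1) := ⟨_, rfl⟩
  have hZ0 : 0 ≤ Z := by rw [hZ]; positivity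
  obtain ⟨cc, hcc⟩ : ∃ cc : ℝ, cc = 64 * (4096 * (A + 1)) ^ 2 * (A + 2) ^ 3 := ⟨_, rfl⟩
  have hcc1 : 1 < cc := by
    have : (1 : ℝ) ≤ (A + 1) ^ 2 := one_le_pow₀ (by linarith [(Nat.cast_nonneg A : (0 : ℝ) ≤ A)])
    have h2 : (1 : ℝ) ≤ (A + 2) ^ 3 := one_le_pow₀ (by linarith [(Nat.cast_nonneg A : (0 : ℝ) ≤ A)])
    have := one_le_mul_of_one_le_of_one_le this h2
    rw [hcc]; nlinarith
  have hlcc : 0 < Real.log cc := Real.log_pos hcc1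
  have hl33 : 0 ≤ Real.log 33 := Real.log_nonneg (by norm_num)
  have hl4 : 0 ≤ Real.log 4 := Real.log_nonneg (by norm_num)
  have hl16 : Real.log 16 = 2 * Real.log 4 := by
    rw [show (16 : ℝ) = 4 ^ 2 by norm_num, Real.log_pow]; norm_num
  have hl2 := Real.log_two_gt_d9
  have hl2' := Real.log_two_lt_d9
  have hlC3 : 0 ≤ Real.log C3 := Real.log_nonneg hC3
  refine ⟨Z * Real.exp (10 * (C5 + Real.log 33 + Real.log cc + Real.log 4)),
    100 * (C + C5 + Real.log 33 + Real.log cc + Real.log 4 + Real.log C3 + 1), ?_⟩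
  intro N J J' f g hL Θ hΘ K Q hK hQ hQ4 hKQ hcl
  have hlK : 0 ≤ Real.log K := Real.log_nonneg hK
  have hlQ : 0 ≤ Real.log Q := Real.log_nonneg hQ
  have hh1 := (h.rseg_ok 0 J').c_pos
  have lQ4 : Real.log Q ≤ Real.log 4 + 2 * (rseg B 0 J').lg := by
    have := Real.log_le_log (by linarith) hQ4
    rw [Real.log_mul (by norm_num) (by positivity), Real.log_pow] at this
    exact_mod_cast this
  have lKQ : Real.log K + Real.log Q ≤ Real.log C3 + 2 * (rseg B 0 J').lg := by
    have := Real.log_le_log (by positivity) hKQ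
    rw [Real.log_mul (by positivity) (by positivity), Real.log_mul (by positivity) (by positivity), Real.log_pow] at this
    exact_mod_cast this
  obtain ⟨i, i1, i2⟩ := hX (Real.log 33 + Real.log K + 2 * Real.log Q) (by positivity)
  obtain ⟨r, r1, r2⟩ := hG (1/2 * Real.log K - 1/2 * Real.log cc) i
  obtain ⟨n, n1, n2⟩ := hY (1/2 * Real.log Q - Real.log 4)
  have r0 := (h.seg_ok i r).lg_nonneg
  have n0 := (h.rseg_ok 0 n).lg_nonneg
  have r1' : (seg B i r).lg ≤ 1/2 * Real.log K := by
    rcases r1 with rfl | r1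
    · rw [lg_seg0]; positivity
    · linarith
  have h1 := g.h1
  have h4 := g.h4
  have hnJ : n ≤ J' := by
    rcases n1 with rfl | n1
    · exact Nat.zero_le _
    · by_contra hcon
      have a1 := h.rseg_mono (show J' + 1 ≤ n by omega)
      have a2 := h.rstep 0 J'
      simp only at a1
      linarith
  have hiJ : i + r ≤ J := by
    by_contra hcon
    have a1 := h.seg_mono (show J + 1 ≤ i + r by omega)
    have a2 := h.lgseg_add i r
    simp only at a1
    linarith
  obtain ⟨s, rfl⟩ : ∃ s, J = i + (r + s) := ⟨J - (i + r), by omega⟩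
  obtain ⟨t, rfl⟩ : ∃ t, J' = n + t := ⟨J' - n, by omega⟩
  refine (MAJ h f g.hf g.hfS g.hfn i r s n t N g.hN g.hW1 g.hW2 K Q hK hQ ?_ ?_ ?_ Θ hΘ hcl).trans ?_
  · rw [h.cexp, ← Real.log_le_iff_le_exp (by positivity), Real.log_mul (by norm_num) (by positivity),
      Real.log_mul (by positivity) (by positivity), Real.log_pow]
    push_cast
    linarith
  · rcases r1 with r1 | r1
    · exact Or.inl r1
    · right
      constructor
      · rintro rfl
        rw [Real.log_one] at r1
        linarith
      · rw [← hcc, h.cexp, ← Real.log_le_log_iff (by positivity) (by positivity),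
          Real.log_mul (by positivity) (by positivity), Real.log_pow, Real.log_exp]
        push_cast
        linarith
  · rcases n1 with n1 | n1
    · exact Or.inl n1
    · right
      rw [h.rcexp, ← Real.log_le_log_iff (by positivity) (by positivity),
          Real.log_mul (by positivity) (by positivity), Real.log_pow, Real.log_exp, hl16]
      push_cast
      linarith
  · rw [h.cexp, h.cexp, h.rcexp, ← Real.exp_mul, ← Real.exp_mul, ← Real.exp_mul]
    have e2 : 1600 * (2 * Real.exp (seg B 0 i).lg) ^ 2 *
        (2 ^ (5/3 : ℝ) * Real.exp ((seg B 0 i).lg * (-(5/3)))) *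
        ((2 ^ (5/3 : ℝ) * Real.exp ((seg B i r).lg * (-(5/3)))) * (2 ^ (5/3 : ℝ) * Real.exp ((rseg B 0 n).lg * (-(5/3))))
          * (2 * ((4096 * (A + 1) : ℕ) : ℝ) + 1))
        = Z * Real.exp (2 * (seg B 0 i).lg + (seg B 0 i).lg * (-(5/3)) + (seg B i r).lg * (-(5/3)) + (rseg B 0 n).lg * (-(5/3))) := by
      rw [Real.exp_add, Real.exp_add, Real.exp_add, two_mul (seg B 0 i).lg, Real.exp_add, hZ]
      ring
    rw [e2, mul_assoc, ← Real.exp_add]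
    refine mul_le_mul_of_nonneg_left (Real.exp_le_exp.mpr ?_) hZ0
    linarith

end Ens

lemma count_gen {P : ℕ} [NeZero P] {ι : Type} [Fintype ι] (p : ι → ℝ) (hp : ∑ i, p i = 1)
    (v : ι → ℕ) (hv : ∀ i, v i < P) (C : ℝ)
    (h : ∑ j ∈ Finset.range P, ‖∑ i, (p i : ℂ) * ZMod.stdAddChar ((j : ZMod P) * (v i : ZMod P))‖ ^ 2 ≤ C) :
    (P : ℝ) ≤ C * (Finset.univ.image v).card := by
  classical
  set D := Finset.univ.image v with hD
  set r : ℕ → ℝ := fun n => ∑ i with v i = n, p i with hr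
  have h1 : ∑ n ∈ D, r n = 1 := by
    rw [← hp]
    exact Finset.sum_fiberwise_of_maps_to (fun i _ => Finset.mem_image_of_mem v (Finset.mem_univ i)) p
  have h2 : ∀ z : ZMod P, ∑ i, (p i : ℂ) * ZMod.stdAddChar (z * (v i : ZMod P))
      = ∑ x : D, (r x : ℂ) * ZMod.stdAddChar (((x : ℕ) : ZMod P) * z + ((0 : ℕ) : ZMod P) * 0) := by
    intro z
    rw [← Finset.sum_fiberwise_of_maps_to (g := v) (t := D)
      (fun i _ => Finset.mem_image_of_mem v (Finset.mem_univ i)), ← Finset.sum_coe_sort D]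
    refine Finset.sum_congr rfl fun x _ => ?_
    rw [hr]
    push_cast
    rw [Finset.sum_mul]
    refine Finset.sum_congr rfl fun i hi => ?_
    rw [(Finset.mem_filter.mp hi).2]
    simp [mul_comm]
  have hlt : ∀ x : D, (x : ℕ) < P := by
    rintro ⟨x, hx⟩
    obtain ⟨i, -, rfl⟩ := Finset.mem_image.mp hx
    exact hv i
  have hP : 0 < P := Nat.pos_of_ne_zero (NeZero.ne P)
  have par := parseval2 (P := P) (X := D) (fun x => (x : ℕ)) (fun _ => 0)
    (fun x y hxy => Subtype.ext (congrArg Prod.fst hxy)) hlt (fun _ => hP) (fun x => (r x : ℂ))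
  rw [Fintype.sum_prod_type] at par
  have e1 : ∀ z : ZMod P, ∑ y : ZMod P, ‖∑ x : D, (r x : ℂ) * ZMod.stdAddChar (((x : ℕ) : ZMod P) * z + ((0 : ℕ) : ZMod P) * y)‖ ^ 2
      = P * ‖∑ i, (p i : ℂ) * ZMod.stdAddChar (z * (v i : ZMod P))‖ ^ 2 := by
    intro z
    rw [h2 z]
    simp [ZMod.card]
  simp only [e1] at par
  rw [← Finset.mul_sum] at par
  have e2 : ∑ z : ZMod P, ‖∑ i, (p i : ℂ) * ZMod.stdAddChar (z * (v i : ZMod P))‖ ^ 2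
      = ∑ j ∈ Finset.range P, ‖∑ i, (p i : ℂ) * ZMod.stdAddChar ((j : ZMod P) * (v i : ZMod P))‖ ^ 2 := by
    refine Finset.sum_nbij' (fun z => z.val) (fun j => (j : ZMod P)) ?_ ?_ ?_ ?_ ?_
    · intro z _; exact Finset.mem_range.mpr (ZMod.val_lt z)
    · intro _ _; exact Finset.mem_univ _
    · intro z _; exact ZMod.natCast_zmod_val z
    · intro j hj; exact ZMod.val_cast_of_lt (Finset.mem_range.mp hj)
    · intro z _; simp only [ZMod.natCast_zmod_val]
  rw [e2] at par
  have hPr : (0 : ℝ) < P := by exact_mod_cast hP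
  have cs : (1 : ℝ) ≤ D.card * ∑ x : D, ‖(r x : ℂ)‖ ^ 2 := by
    have := sq_sum_le_card_mul_sum_sq (s := D) (f := r)
    rw [h1, one_pow, ← Finset.sum_coe_sort D] at this
    refine this.trans (le_of_eq ?_)
    congr 1
    refine Finset.sum_congr rfl fun x _ => ?_
    rw [Complex.norm_real, Real.norm_eq_abs, sq_abs]
  have k : P * ∑ x : D, ‖(r x : ℂ)‖ ^ 2 ≤ C := by
    refine le_trans (le_of_eq ?_) h
    have : (P : ℝ) * (P * ∑ x : D, ‖(r x : ℂ)‖ ^ 2) = P * ∑ j ∈ Finset.range P, ‖∑ i, (p i : ℂ) * ZMod.stdAddChar ((j : ZMod P) * (v i : ZMod P))‖ ^ 2 := by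
      rw [par]; ring
    exact mul_left_cancel₀ hPr.ne' this
  calc (P : ℝ) ≤ P * (D.card * ∑ x : D, ‖(r x : ℂ)‖ ^ 2) := by nlinarith
    _ = (P * ∑ x : D, ‖(r x : ℂ)‖ ^ 2) * D.card := by ring
    _ ≤ _ := by gcongr

namespace Ens

lemma arcs {P j D : ℕ} {m : ℤ} {h X C : ℝ} (hh : 1 ≤ h) (hX : 0 < X) (hC : 0 ≤ C)
    (hP : (P : ℝ) ≤ C * (X * h)) (hD : 1 ≤ D) (hD' : (D : ℝ) ≤ (2 * h) ^ 2)
    (hb : |(((j : ℤ) * D - (P : ℤ) * m : ℤ) : ℝ)| * (5 * (4 * X)) ≤ 2 * (2 * h) * P) :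
    ∃ κ l : ℕ, (2 : ℝ) ^ l ≤ 4 * h ^ 2 ∧ (2 : ℝ) ^ κ * 2 ^ l ≤ (4 + C) * h ^ 2 ∧
      cls P (2 ^ κ) (2 ^ l) j := by
  have hb1 : |(((j : ℤ) * D - (P : ℤ) * m : ℤ) : ℝ)| ≤ C * h ^ 2 := by
    have h1 : 2 * (2 * h) * P ≤ 2 * (2 * h) * (C * (X * h)) := by gcongr
    have h2 : |(((j : ℤ) * D - (P : ℤ) * m : ℤ) : ℝ)| * (20 * X) ≤ (C * h ^ 2) * (20 * X) := by
      have : 0 ≤ C * h ^ 2 * X := by positivity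
      nlinarith
    exact le_of_mul_le_mul_right h2 (by positivity)
  have hg : 0 < Int.gcd m D := Int.gcd_pos_of_ne_zero_right _ (by positivity)
  obtain ⟨a, q', hcop, ha, hq⟩ := Int.exists_gcd_one hg
  set g := Int.gcd m D with hgdef
  have hq0 : 0 < q' := by
    have : (0 : ℤ) < D := by exact_mod_cast hD
    rw [hq] at this
    exact pos_of_mul_pos_left this (by positivity)
  lift q' to ℕ using hq0.le with q
  have hq0' : 0 < q := by exact_mod_cast hq0
  have hqD : q ≤ D := by
    have : D = q * g := by exact_mod_cast hq
    rw [this]; exact Nat.le_mul_of_pos_right _ hg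
  have hgr : (1 : ℝ) ≤ g := by exact_mod_cast hg
  have hqr : (1 : ℝ) ≤ q := by exact_mod_cast hq0'
  have hb2 : |(j : ℝ) * q - P * a| ≤ C * h ^ 2 := by
    refine le_trans ?_ hb1
    have : (((j : ℤ) * D - (P : ℤ) * m : ℤ) : ℝ) = ((j : ℝ) * q - P * a) * g := by
      rw [ha, hq]; push_cast; ring
    rw [this, abs_mul, abs_of_nonneg (by linarith : (0 : ℝ) ≤ g)]
    exact le_mul_of_one_le_right (abs_nonneg _) hgr
  obtain ⟨l, l1, l2⟩ := exists_nat_pow_near hqr (by norm_num : (1 : ℝ) < 2)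
  set b := |(j : ℝ) * q - P * a| / q with hbdef
  have hbq : b * q = |(j : ℝ) * q - P * a| := by rw [hbdef]; field_simp
  obtain ⟨κ, k1, k2⟩ := exists_nat_pow_near (le_max_left 1 b) (by norm_num : (1 : ℝ) < 2)
  have hqh : (q : ℝ) ≤ 4 * h ^ 2 := by
    have : (q : ℝ) ≤ D := by exact_mod_cast hqD
    nlinarith
  refine ⟨κ, l, l1.trans hqh, ?_, a, q, hq0', Int.isCoprime_iff_gcd_eq_one.mpr hcop, l1, ?_, ?_, ?_⟩
  · have hb0 : 0 ≤ b := by positivity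
    calc (2 : ℝ) ^ κ * 2 ^ l ≤ max 1 b * q := by gcongr
      _ ≤ (1 + b) * q := by gcongr; exact max_le (by linarith) (by linarith)
      _ = q + |(j : ℝ) * q - P * a| := by rw [← hbq]; ring
      _ ≤ _ := by linarith
  · rw [pow_succ] at l2; linarith
  · rw [← hbq]
    rw [pow_succ] at k2
    have := le_max_right 1 b
    gcongr
    linarith
  · rcases Nat.eq_zero_or_pos κ with rfl | hκ
    · left; simp
    · right
      rw [← hbq]
      have : (1 : ℝ) < 2 ^ κ := one_lt_pow₀ (by norm_num) (by omega)
      rcases le_max_iff.mp k1 with h1 | h1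
      · linarith
      · gcongr

variable {B : ℕ → Ens} {A : ℕ} {S : Finset ℕ} {C1 : ℝ}

lemma Blk.total (h : Blk A S C1 B) {C : ℝ} (hC : 0 ≤ C) : ∃ C4 L0 : ℝ, ∀ N J J' f, Cfg B A S C N J J' f →
    L0 ≤ Real.log N → ∑ j ∈ Finset.range (N + 1), ‖Sx B f J J' N j‖ ^ 2 ≤ C4 := by
  classical
  obtain ⟨Cm, Lm, hmin⟩ := h.min1 hC
  obtain ⟨CM, LM, hmaj⟩ := h.maj1 hC (show 1 ≤ 4 + C by linarith)
  obtain ⟨ρ, hρ⟩ : ∃ ρ : ℝ, ρ = Real.exp (-(Real.log 2) / 10) := ⟨_, rfl⟩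
  have hρ0 : 0 < ρ := by rw [hρ]; exact Real.exp_pos _
  have hρ1 : ρ < 1 := by
    rw [hρ, Real.exp_lt_one_iff]
    have := Real.log_two_gt_d9
    linarith
  have hs : Summable fun x : ℕ × ℕ => ρ ^ x.1 * ρ ^ x.2 :=
    (summable_geometric_of_lt_one hρ0.le hρ1).mul_of_nonneg (summable_geometric_of_lt_one hρ0.le hρ1)
      (fun _ => by positivity) (fun _ => by positivity)
  refine ⟨Cm + |CM| * ∑' x : ℕ × ℕ, ρ ^ x.1 * ρ ^ x.2, max Lm LM, ?_⟩
  intro N J J' f g hL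
  have hm := (h.seg_ok 0 J).c_pos
  have hh := (h.rseg_ok 0 J').c_pos
  have hφ : (1 : ℝ) ≤ cont f := by exact_mod_cast cont_pos g.hf
  set Pm : ℕ → Prop := fun j => ∀ D : ℕ, 1 ≤ D → (D : ℝ) ≤ (2 * (rseg B 0 J').c) ^ 2 → ∀ m : ℤ,
      2 * (2 * (rseg B 0 J').c) * ((N + 1 : ℕ) : ℝ) <
        |(((j : ℤ) * D - ((N + 1 : ℕ) : ℤ) * m : ℤ) : ℝ)| * (5 * (4 * ((seg B 0 J).c * cont f))) with hPm
  rw [← Finset.sum_filter_add_sum_filter_not _ Pm]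
  refine add_le_add ?_ ?_
  · refine hmin N J J' f g ((le_max_left _ _).trans hL) _ ?_ ?_
    · intro j hj; exact Finset.mem_range.mp (Finset.mem_filter.mp hj).1
    · intro j hj; exact (Finset.mem_filter.mp hj).2
  · have hch : ∀ j, ¬ Pm j → ∃ x : ℕ × ℕ, (2 : ℝ) ^ x.2 ≤ 4 * (rseg B 0 J').c ^ 2 ∧
        (2 : ℝ) ^ x.1 * 2 ^ x.2 ≤ (4 + C) * (rseg B 0 J').c ^ 2 ∧ cls (N + 1) (2 ^ x.1) (2 ^ x.2) j := by
      intro j hj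
      rw [hPm] at hj
      push Not at hj
      obtain ⟨D, hD, hD', m, hb⟩ := hj
      obtain ⟨κ, l, hx⟩ := arcs (P := N + 1) (X := (seg B 0 J).c * cont f) hh (by positivity) hC g.h6 hD hD' hb
      exact ⟨(κ, l), hx⟩
    choose! F hF1 hF2 hF3 using hch
    set M := (Finset.range (N + 1)).filter fun j => ¬ Pm j with hM
    rw [← Finset.sum_fiberwise_of_maps_to (g := F) (t := M.image F) (fun i hi => Finset.mem_image_of_mem F hi)]
    calc _ ≤ ∑ x ∈ M.image F, |CM| * (ρ ^ x.1 * ρ ^ x.2) := by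
          refine Finset.sum_le_sum fun x hx => ?_
          obtain ⟨j0, hj0, rfl⟩ := Finset.mem_image.mp hx
          have hn := (Finset.mem_filter.mp hj0).2
          refine (hmaj N J J' f g ((le_max_right _ _).trans hL) _ ?_ (2 ^ (F j0).1) (2 ^ (F j0).2)
            (one_le_pow₀ (by norm_num)) (one_le_pow₀ (by norm_num)) (hF1 _ hn) (hF2 _ hn) ?_).trans ?_
          · intro j hj
            exact Finset.mem_range.mp (Finset.mem_filter.mp (Finset.mem_filter.mp hj).1).1
          · intro j hj
            obtain ⟨a1, a2⟩ := Finset.mem_filter.mp hj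
            have := hF3 j (Finset.mem_filter.mp a1).2
            rwa [a2] at this
          · have : Real.exp (-(Real.log (2 ^ (F j0).1) + Real.log (2 ^ (F j0).2)) / 10) = ρ ^ (F j0).1 * ρ ^ (F j0).2 := by
              rw [hρ, ← Real.exp_nat_mul, ← Real.exp_nat_mul, ← Real.exp_add, Real.log_pow, Real.log_pow]
              congr 1; ring
            rw [this]
            gcongr
            exact le_abs_self _
      _ = |CM| * ∑ x ∈ M.image F, (ρ ^ x.1 * ρ ^ x.2) := by rw [Finset.mul_sum]
      _ ≤ _ := by
          gcongr
          exact hs.sum_le_tsum _ (fun _ _ => by positivity)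

lemma Blk.final (h : Blk A S C1 B) {a : ℕ} (ha : 2 ≤ a) (haA : a ≤ A) (haS : a ∈ S) :
    ∃ c : ℝ, 0 < c ∧ ∃ N₀ : ℕ, ∀ N : ℕ, N₀ ≤ N → c * N ≤ ((DD S N).ncard : ℝ) := by
  classical
  obtain ⟨C, hC, hcfg⟩ := h.cfg ha haA haS
  obtain ⟨C4, L0, htot⟩ := h.total hC
  refine ⟨1 / (|C4| + 1), by positivity, ⌈Real.exp (max C L0)⌉₊ + 1, ?_⟩
  intro N hN
  have hN1 : 1 ≤ N := by omega
  have hlog : max C L0 ≤ Real.log N := by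
    rw [Real.le_log_iff_exp_le (by exact_mod_cast hN1)]
    exact (Nat.le_ceil _).trans (by exact_mod_cast (by omega : ⌈Real.exp (max C L0)⌉₊ ≤ N))
  obtain ⟨J, J', f, g⟩ := hcfg N hN1 ((le_max_left _ _).trans hlog)
  have ht := htot N J J' f g ((le_max_right _ _).trans hlog)
  obtain ⟨E, hE⟩ : ∃ E : Ens, E = (seg B 0 J).mul ((pure f).mul (rseg B 0 J')) := ⟨_, rfl⟩
  have oE : Ok A S 4 E := by
    have := ok_mul (by norm_num) (h.seg_ok 0 J) (ok_mul (by norm_num) (ok_pure g.hf g.hfS) (h.rseg_ok 0 J'))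
    norm_num at this
    rw [hE]; exact this
  have hEc : E.c = cont (Wb B f J J') := by subst hE; rfl
  have hEn : ∀ i, E.wd i ≠ [] := by
    subst hE
    intro l
    change (seg B 0 J).wd _ ++ (f ++ _) ≠ []
    simp [g.hfn]
  have hle : ∀ i, cont (E.wd i) ≤ N := by
    intro i
    have h1 := oE.le_c i
    have h2 := g.hW1
    rw [hEc] at h1
    have : (0 : ℝ) ≤ cont (Wb B f J J') := by positivity
    exact_mod_cast (by linarith : (cont (E.wd i) : ℝ) ≤ N)
  have hS : ∀ j, Sx B f J J' N j = ∑ i, (E.p i : ℂ) * ZMod.stdAddChar ((j : ZMod (N + 1)) * ((cont (E.wd i) : ℕ) : ZMod (N + 1))) := by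
    intro j
    have : Sx B f J J' N j = E.ex fun w => ZMod.stdAddChar ((j : ZMod (N + 1)) * ((cont w : ℕ) : ZMod (N + 1))) := by
      rw [hE]
      simp only [ex_mul, ex_pure]
      rfl
    rw [this]; rfl
  simp only [hS] at ht
  have hc := count_gen (P := N + 1) E.p oE.p1 (fun i => cont (E.wd i)) (fun i => Nat.lt_succ_of_le (hle i)) C4 ht
  have hsub : ((Finset.univ.image fun i => cont (E.wd i) : Finset ℕ) : Set ℕ) ⊆ DD S N := by
    intro d hd
    rw [Finset.mem_coe] at hd
    obtain ⟨i, -, rfl⟩ := Finset.mem_image.mp hd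
    exact ⟨cont_pos (oE.dg i), hle i, E.wd i, hEn i, oE.mem i, rfl⟩
  have hfin : (DD S N).Finite := (Set.finite_Iic N).subset fun d hd => hd.2.1
  have hcard := Set.ncard_le_ncard hsub hfin
  rw [Set.ncard_coe_finset] at hcard
  have hcr : (((Finset.univ.image fun i => cont (E.wd i)).card : ℕ) : ℝ) ≤ ((DD S N).ncard : ℝ) := by exact_mod_cast hcard
  rw [div_mul_eq_mul_div, one_mul, div_le_iff₀ (by positivity)]
  have h5 : C4 * ((Finset.univ.image fun i => cont (E.wd i)).card : ℝ) ≤ (|C4| + 1) * ((DD S N).ncard : ℝ) := by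
    gcongr
    linarith [le_abs_self C4]
  push_cast at hc
  linarith

end Ens

def Wn (S : Finset ℕ) : ℕ → Finset (List ℕ)
  | 0 => {[]}
  | n + 1 => Finset.image₂ (fun d l => d :: l) S (Wn S n)

lemma mem_Wn {S : Finset ℕ} : ∀ {n : ℕ} {l : List ℕ}, l ∈ Wn S n ↔ l.length = n ∧ ∀ d ∈ l, d ∈ S
  | 0, l => by
    simp only [Wn, Finset.mem_singleton, List.length_eq_zero_iff]
    constructor
    · rintro rfl; simp
    · exact fun h => h.1
  | n + 1, l => by
    simp only [Wn, Finset.mem_image₂]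
    constructor
    · rintro ⟨d, hd, l', hl', rfl⟩
      rw [mem_Wn] at hl'
      refine ⟨by simp [hl'.1], ?_⟩
      intro e he
      rcases List.mem_cons.mp he with rfl | he
      exacts [hd, hl'.2 e he]
    · rintro ⟨h1, h2⟩
      cases l with
      | nil => simp at h1
      | cons d l' =>
        exact ⟨d, h2 d (by simp), l', mem_Wn.mpr ⟨by simpa using h1, fun e he => h2 e (by simp [he])⟩, rfl⟩

def Zn (S : Finset ℕ) (n : ℕ) : ℝ := ∑ w ∈ Wn S n, (cont w : ℝ) ^ (-(5/3) : ℝ)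

lemma cont_ge_pow {A : ℕ} : ∀ (n : ℕ) (l : List ℕ), dig A l → 2 * n ≤ l.length → 2 ^ n ≤ cont l
  | 0, l, h, _ => by simpa using cont_pos h
  | n + 1, l, h, hl => by
    match l, h, hl with
    | [], _, hl => simp at hl
    | [_], _, hl => simp at hl; omega
    | d :: e :: l, h, hl =>
      have hl' : dig A l := fun x hx => h x (by simp [hx])
      have ih := cont_ge_pow n l hl' (by simp at hl; omega)
      have h2 : cont l ≤ cont (e :: l) := by
        have := cont_app_ge [e] l
        have he := (h e (by simp)).1
        simp only [cont, List.singleton_append] at this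
        nlinarith
      have hd := (h d (by simp)).1
      simp only [cont]
      rw [pow_succ]
      nlinarith

lemma cont_le_pow {A : ℕ} (l : List ℕ) (h : dig A l) : cont l ≤ (A + 1) ^ l.length := by
  rw [cont_eq]
  induction l with
  | nil => simp [Mw_nil]
  | cons d l ih =>
    have hl : dig A l := fun x hx => h x (by simp [hx])
    have hd := (h d (by simp)).2
    have h1 := (Mw_le10 hl).2
    have h2 := ih hl
    rw [Mw_cons0, List.length_cons, pow_succ]
    nlinarith [Nat.mul_le_mul_right (Mw l 0 0) hd]

lemma cfVal_diff {A : ℕ} (w u v : List ℕ) (hwn : w ≠ []) (hw : dig A w) (hu : dig A u) (hv : dig A v) :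
    |cfVal (w ++ u) - cfVal (w ++ v)| ≤ 1 / (cont w : ℝ) ^ 2 := by
  have hcf : ∀ x : List ℕ, x ≠ [] → cfVal x = (Mw x 1 0 : ℝ) / Mw x 0 0 := by
    intro x hx
    cases x with
    | nil => exact absurd rfl hx
    | cons d l => rw [cfVal, List.tail_cons, cont_eq, cont_eq, Mw_cons1]
  rw [hcf _ (by simp [hwn]), hcf _ (by simp [hwn])]
  have pu : (1 : ℝ) ≤ Mw (w ++ u) 0 0 := by exact_mod_cast Mw_pos (dig_append hw hu)
  have pv : (1 : ℝ) ≤ Mw (w ++ v) 0 0 := by exact_mod_cast Mw_pos (dig_append hw hv)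
  have pw : (1 : ℝ) ≤ cont w := by exact_mod_cast cont_pos hw
  have e : (Mw (w ++ u) 1 0 : ℝ) / Mw (w ++ u) 0 0 - Mw (w ++ v) 1 0 / Mw (w ++ v) 0 0
      = -((wdg (w ++ u) (w ++ v) : ℤ) : ℝ) / (Mw (w ++ u) 0 0 * Mw (w ++ v) 0 0) := by
    unfold wdg
    push_cast
    field_simp
    ring
  rw [e, abs_div, abs_neg, abs_of_pos (by positivity : (0 : ℝ) < Mw (w ++ u) 0 0 * Mw (w ++ v) 0 0)]
  have h1 : |wdg (w ++ u) (w ++ v)| ≤ (Mw u 0 0 : ℤ) * Mw v 0 0 := by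
    rw [wdg_app]
    unfold wdg
    have a1 := (Mw_le10 hu).2
    have a2 := (Mw_le10 hv).2
    have b1 : (0 : ℤ) ≤ Mw u 0 0 * Mw v 1 0 := by positivity
    have b2 : (0 : ℤ) ≤ Mw u 1 0 * Mw v 0 0 := by positivity
    have b3 : (Mw u 0 0 : ℤ) * Mw v 1 0 ≤ Mw u 0 0 * Mw v 0 0 := by gcongr
    have b4 : (Mw u 1 0 : ℤ) * Mw v 0 0 ≤ Mw u 0 0 * Mw v 0 0 := by gcongr
    rw [abs_le]
    constructor <;> linarith
  have h1r : |((wdg (w ++ u) (w ++ v) : ℤ) : ℝ)| ≤ (Mw u 0 0 : ℝ) * Mw v 0 0 := by exact_mod_cast h1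
  have g1 : (cont w : ℝ) * Mw u 0 0 ≤ Mw (w ++ u) 0 0 := by
    have := cont_app_ge w u
    rw [cont_eq u, cont_eq (w ++ u)] at this
    exact_mod_cast this
  have g2 : (cont w : ℝ) * Mw v 0 0 ≤ Mw (w ++ v) 0 0 := by
    have := cont_app_ge w v
    rw [cont_eq v, cont_eq (w ++ v)] at this
    exact_mod_cast this
  rw [div_le_div_iff₀ (by positivity) (by positivity), one_mul]
  calc |((wdg (w ++ u) (w ++ v) : ℤ) : ℝ)| * (cont w : ℝ) ^ 2 ≤ ((Mw u 0 0 : ℝ) * Mw v 0 0) * (cont w : ℝ) ^ 2 := by gcongr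
    _ = ((cont w : ℝ) * Mw u 0 0) * ((cont w : ℝ) * Mw v 0 0) := by ring
    _ ≤ _ := by gcongr

lemma map_range_split (d : ℕ → ℕ) (n K : ℕ) (h : n ≤ K) :
    (List.range K).map d = (List.range n).map d ++ ((List.range (K - n)).map fun i => d (n + i)) := by
  obtain ⟨m, rfl⟩ := Nat.exists_eq_add_of_le h
  rw [List.range_add, List.map_append, List.map_map, Nat.add_sub_cancel_left]
  rfl

lemma exists_Zn (A : Finset ℕ) (hpos : ∀ a ∈ A, 0 < a) (hδ : 1 - 1/6 < hdim A) (G : ℝ) :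
    ∃ n, G ≤ Zn A n := by
  by_contra hcon
  push Not at hcon
  have hAdig : ∀ l : List ℕ, (∀ d ∈ l, d ∈ A) → dig (A.sup id) l := fun l hl d hd =>
    ⟨hpos d (hl d hd), Finset.le_sup (f := id) (hl d hd)⟩
  have hdim1 : ((5/6 : NNReal) : ENNReal) < dimH (cfSet A) := by
    by_contra hle
    push Not at hle
    have h1 : hdim A ≤ ((5/6 : NNReal) : ENNReal).toReal := ENNReal.toReal_mono ENNReal.coe_ne_top hle
    rw [ENNReal.coe_toReal] at h1
    push_cast at h1
    linarith
  have hH := hausdorffMeasure_of_lt_dimH hdim1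
  set t : ∀ n : ℕ, (Wn A (2 * n)) → Set ℝ := fun n w => {x | ∃ d : ℕ → ℕ, (∀ i, d i ∈ A) ∧
    Tendsto (fun k => cfVal ((List.range k).map d)) atTop (nhds x) ∧ (List.range (2 * n)).map d = w} with ht
  have hdiam : ∀ n, 1 ≤ n → ∀ w : Wn A (2 * n), Metric.ediam (t n w) ≤ ENNReal.ofReal (1 / (cont (w : List ℕ) : ℝ) ^ 2) := by
    intro n hn w
    have hw := mem_Wn.mp w.2
    refine Metric.ediam_le ?_
    rintro x ⟨d, hd, hx, hdw⟩ y ⟨e, he, hy, hew⟩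
    rw [edist_dist]
    refine ENNReal.ofReal_le_ofReal ?_
    have hlim : Tendsto (fun k => |cfVal ((List.range k).map d) - cfVal ((List.range k).map e)|) atTop (nhds |x - y|) :=
      (hx.sub hy).abs
    rw [Real.dist_eq]
    refine le_of_tendsto hlim ?_
    filter_upwards [eventually_ge_atTop (2 * n)] with K hK
    rw [map_range_split d _ K hK, map_range_split e _ K hK, hdw, hew]
    refine cfVal_diff (A := A.sup id) _ _ _ ?_ (hAdig _ hw.2) (hAdig _ ?_) (hAdig _ ?_)
    · intro h0
      rw [h0] at hw
      simp at hw
      omega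
    · intro x hx
      obtain ⟨i, -, rfl⟩ := List.mem_map.mp hx
      exact hd _
    · intro x hx
      obtain ⟨i, -, rfl⟩ := List.mem_map.mp hx
      exact he _
  have hge : ∀ n, ∀ w : Wn A (2 * n), (2 : ℝ) ^ n ≤ cont (w : List ℕ) := by
    intro n w
    have hw := mem_Wn.mp w.2
    exact_mod_cast cont_ge_pow n _ (hAdig _ hw.2) hw.1.ge
  have hr : Tendsto (fun n : ℕ => ENNReal.ofReal ((1/4 : ℝ) ^ n)) atTop (nhds 0) := by
    have := ENNReal.tendsto_ofReal (tendsto_pow_atTop_nhds_zero_of_lt_one (r := (1/4 : ℝ)) (by norm_num) (by norm_num))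
    simpa using this
  have hmain := MeasureTheory.Measure.hausdorffMeasure_le_liminf_sum ((5/6 : NNReal) : ℝ) (cfSet A)
    (l := atTop) (fun n : ℕ => ENNReal.ofReal ((1/4 : ℝ) ^ n)) hr t ?_ ?_
  · rw [hH, top_le_iff] at hmain
    have hle : Filter.liminf (fun n => ∑ i, Metric.ediam (t n i) ^ ((5/6 : NNReal) : ℝ)) atTop ≤ ENNReal.ofReal G := by
      refine Filter.liminf_le_of_frequently_le' (Eventually.frequently ?_)
      filter_upwards [eventually_ge_atTop 1] with n hn
      have hG := (hcon (2 * n)).le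
      refine le_trans ?_ (ENNReal.ofReal_le_ofReal hG)
      unfold Zn
      rw [ENNReal.ofReal_sum_of_nonneg (fun _ _ => by positivity), ← Finset.sum_coe_sort (Wn A (2 * n))]
      refine Finset.sum_le_sum fun w _ => ?_
      have hc : (0 : ℝ) < cont (w : List ℕ) := lt_of_lt_of_le (by positivity) (hge n w)
      refine (ENNReal.rpow_le_rpow (hdiam n hn w) (by positivity)).trans ?_
      rw [ENNReal.ofReal_rpow_of_nonneg (by positivity) (by positivity)]
      refine ENNReal.ofReal_le_ofReal (le_of_eq ?_)
      rw [one_div, ← Real.rpow_natCast, ← Real.rpow_neg hc.le, ← Real.rpow_mul hc.le]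
      congr 1
      push_cast
      norm_num
    rw [hmain] at hle
    exact absurd hle (by simp)
  · filter_upwards [eventually_ge_atTop 1] with n hn w
    refine (hdiam n hn w).trans (ENNReal.ofReal_le_ofReal ?_)
    have h1 := hge n w
    have h2 : (4 : ℝ) ^ n ≤ (cont (w : List ℕ) : ℝ) ^ 2 := by
      calc (4 : ℝ) ^ n = (2 ^ n) ^ 2 := by rw [← pow_mul, mul_comm, pow_mul]; norm_num
        _ ≤ _ := by gcongr
    rw [div_pow, one_pow]
    exact one_div_le_one_div_of_le (by positivity) h2
  · refine Eventually.of_forall fun n => ?_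
    rintro x ⟨d, hd, hx⟩
    refine Set.mem_iUnion.mpr ⟨⟨(List.range (2 * n)).map d, mem_Wn.mpr ⟨by simp, ?_⟩⟩, d, hd, hx, rfl⟩
    intro y hy
    obtain ⟨i, -, rfl⟩ := List.mem_map.mp hy
    exact hd _

lemma two_rpow_le : (2 : ℝ) ^ (5/3 : ℝ) ≤ 4 := by
  calc (2 : ℝ) ^ (5/3 : ℝ) ≤ 2 ^ (2 : ℝ) := Real.rpow_le_rpow_of_exponent_le (by norm_num) (by norm_num)
    _ = 4 := by norm_num

lemma two_mul_rpow {x : ℝ} (hx : 0 < x) : x ^ (-(5/3) : ℝ) ≤ 4 * (2 * x) ^ (-(5/3) : ℝ) := by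
  rw [Real.mul_rpow (by norm_num) hx.le, ← mul_assoc]
  refine le_mul_of_one_le_left (by positivity) ?_
  rw [Real.rpow_neg (by norm_num), ← div_eq_mul_inv, le_div_iff₀ (by positivity), one_mul]
  exact two_rpow_le

lemma Wn_dig {S : Finset ℕ} {A : ℕ} (hS : ∀ d ∈ S, 1 ≤ d ∧ d ≤ A) {n : ℕ} {w : List ℕ} (h : w ∈ Wn S n) : dig A w :=
  fun d hd => hS d ((mem_Wn.mp h).2 d hd)

lemma Zn_mul {S : Finset ℕ} {A : ℕ} (hS : ∀ d ∈ S, 1 ≤ d ∧ d ≤ A) (n m : ℕ) :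
    Zn S n * Zn S m ≤ 4 * Zn S (n + m) := by
  classical
  unfold Zn
  rw [Finset.sum_mul_sum, ← Finset.sum_product', Finset.mul_sum]
  have hinj : Set.InjOn (fun x : List ℕ × List ℕ => x.1 ++ x.2) (Wn S n ×ˢ Wn S m : Finset _) := by
    rintro ⟨a, b⟩ h1 ⟨a', b'⟩ h2 h
    simp only [Finset.coe_product, Set.mem_prod, Finset.mem_coe] at h1 h2
    obtain ⟨e1, e2⟩ := List.append_inj h ((mem_Wn.mp h1.1).1.trans (mem_Wn.mp h2.1).1.symm)
    exact Prod.ext e1 e2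
  calc _ ≤ ∑ x ∈ Wn S n ×ˢ Wn S m, 4 * (cont (x.1 ++ x.2) : ℝ) ^ (-(5/3) : ℝ) := by
        refine Finset.sum_le_sum fun x hx => ?_
        obtain ⟨h1, h2⟩ := Finset.mem_product.mp hx
        have d1 := Wn_dig hS h1
        have d2 := Wn_dig hS h2
        have c1 : (1 : ℝ) ≤ cont x.1 := by exact_mod_cast cont_pos d1
        have c2 : (1 : ℝ) ≤ cont x.2 := by exact_mod_cast cont_pos d2
        have c3 : (1 : ℝ) ≤ cont (x.1 ++ x.2) := by exact_mod_cast cont_pos (dig_append d1 d2)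
        have c4 : (cont (x.1 ++ x.2) : ℝ) ≤ 2 * (cont x.1 * cont x.2) := by exact_mod_cast cont_app_le d1 d2
        rw [← Real.mul_rpow (by positivity) (by positivity)]
        refine (two_mul_rpow (by positivity)).trans ?_
        refine mul_le_mul_of_nonneg_left ?_ (by norm_num)
        exact Real.rpow_le_rpow_of_nonpos (by linarith) c4 (by norm_num)
    _ = ∑ w ∈ (Wn S n ×ˢ Wn S m).image (fun x => x.1 ++ x.2), 4 * (cont w : ℝ) ^ (-(5/3) : ℝ) := by
        rw [Finset.sum_image hinj]
    _ ≤ _ := by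
        refine Finset.sum_le_sum_of_subset_of_nonneg ?_ (fun _ _ _ => by positivity)
        intro w hw
        obtain ⟨x, hx, rfl⟩ := Finset.mem_image.mp hw
        obtain ⟨h1, h2⟩ := Finset.mem_product.mp hx
        rw [mem_Wn] at h1 h2 ⊢
        refine ⟨by simp [h1.1, h2.1], ?_⟩
        intro d hd
        rcases List.mem_append.mp hd with h | h
        exacts [h1.2 d h, h2.2 d h]

lemma Zn_pow {S : Finset ℕ} {A : ℕ} (hS : ∀ d ∈ S, 1 ≤ d ∧ d ≤ A) (k : ℕ) (hk : 2048 ≤ Zn S k) (m : ℕ) :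
    (512 : ℝ) ^ m ≤ Zn S (k * m) := by
  induction m with
  | zero => simp [Zn, Wn, cont]
  | succ m ih =>
    have h1 := Zn_mul hS (k * m) k
    have h2 : (512 : ℝ) ^ m * 2048 ≤ Zn S (k * m) * Zn S k := by gcongr; exact le_trans (by positivity) ih
    rw [Nat.mul_succ, pow_succ]
    linarith

lemma Mw_pos_all {A : ℕ} {w : List ℕ} (h : dig A w) (hl : 2 ≤ w.length) (a b : Fin 2) : 1 ≤ Mw w a b := by
  have hn : w ≠ [] := by rintro rfl; simp at hl
  have h00 := Mw_pos h
  fin_cases a <;> fin_cases b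
  · exact h00
  · have := Mw_lb01 h hn
    change 1 ≤ Mw w 0 1
    by_contra hc
    have h0 : Mw w 0 1 = 0 := by omega
    rw [h0] at this; omega
  · have := Mw_lb10 h hn
    change 1 ≤ Mw w 1 0
    by_contra hc
    have h0 : Mw w 1 0 = 0 := by omega
    rw [h0] at this; omega
  · change 1 ≤ Mw w 1 1
    match w, h, hl with
    | d :: e :: l, h, _ =>
      rw [Mw_cons1]
      have hd : dig A (e :: l) := fun x hx => h x (by simp at hx ⊢; tauto)
      have := Mw_lb01 hd (by simp)
      have h1 := Mw_pos hd
      by_contra hc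
      have h0 : Mw (e :: l) 0 1 = 0 := by omega
      rw [h0] at this; omega

lemma Mw_le_all {A : ℕ} {w : List ℕ} (h : dig A w) (a b : Fin 2) : Mw w a b ≤ cont w := by
  rw [cont_eq]
  fin_cases a <;> fin_cases b
  · exact le_rfl
  · exact Mw_le01 h
  · exact (Mw_le10 h).2
  · exact Mw_le11 h

namespace Ens

/-- pigeonhole cell -/
lemma cell {S : Finset ℕ} {A : ℕ} (hS : ∀ d ∈ S, 1 ≤ d ∧ d ≤ A) (n i : ℕ) (hn : 2 ≤ n)
    (hZ : 4 * ((n * (A + 1) * 2 ^ (i + 2) + 1 : ℕ) : ℝ) ^ 4 ≤ Zn S n) :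
    ∃ T : Finset (List ℕ), T ⊆ Wn S n ∧ 4 ≤ ∑ w ∈ T, (cont w : ℝ) ^ (-(5/3) : ℝ) ∧
      ∀ w ∈ T, ∀ w' ∈ T, ∀ a b, (Mw w a b : ℝ) ≤ Real.exp ((1/2) ^ (i + 2)) * Mw w' a b := by
  classical
  set U := n * (A + 1) * 2 ^ (i + 2) + 1 with hU
  set F : List ℕ → (Fin 2 × Fin 2 → ℕ) := fun w x => ⌊Real.log (Mw w x.1 x.2) * 2 ^ (i + 2)⌋₊ with hF
  set tt : Finset (Fin 2 × Fin 2 → ℕ) := Fintype.piFinset fun _ => Finset.range U with htt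
  have hcard : tt.card = U ^ 4 := by
    rw [htt, Fintype.card_piFinset]
    simp
  have hmaps : ∀ w ∈ Wn S n, F w ∈ tt := by
    intro w hw
    rw [htt, Fintype.mem_piFinset]
    intro x
    have hd := Wn_dig hS hw
    rw [Finset.mem_range, hF, Nat.lt_succ_iff]
    refine Nat.floor_le_of_le ?_
    push_cast
    refine mul_le_mul_of_nonneg_right ?_ (by positivity)
    have h1 : (1 : ℝ) ≤ Mw w x.1 x.2 := by
      exact_mod_cast Mw_pos_all hd (by rw [(mem_Wn.mp hw).1]; exact hn) x.1 x.2
    have h2 : (Mw w x.1 x.2 : ℝ) ≤ ((A : ℝ) + 1) ^ n := by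
      have := (Mw_le_all hd x.1 x.2).trans (cont_le_pow w hd)
      rw [(mem_Wn.mp hw).1] at this
      exact_mod_cast this
    have h3 := Real.log_le_log (by linarith) h2
    rw [Real.log_pow] at h3
    refine h3.trans ?_
    gcongr
    exact Real.log_le_self (by positivity)
  have hne : tt.Nonempty := by
    rw [← Finset.card_pos, hcard, hU]; positivity
  obtain ⟨y, -, hy⟩ := Finset.exists_le_sum_fiber_of_maps_to_of_nsmul_le_sum (s := Wn S n) (t := tt) (f := F)
    (w := fun w => (cont w : ℝ) ^ (-(5/3) : ℝ)) (b := 4) hmaps hne (by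
      rw [hcard, nsmul_eq_mul]
      push_cast
      unfold Zn at hZ
      linarith)
  refine ⟨_, Finset.filter_subset _ _, hy, ?_⟩
  intro w hw w' hw' a b
  obtain ⟨w1, w2⟩ := Finset.mem_filter.mp hw
  obtain ⟨w1', w2'⟩ := Finset.mem_filter.mp hw'
  have e : F w (a, b) = F w' (a, b) := by rw [w2, w2']
  simp only [hF] at e
  have h1 : (1 : ℝ) ≤ Mw w a b := by
    exact_mod_cast Mw_pos_all (Wn_dig hS w1) (by rw [(mem_Wn.mp w1).1]; exact hn) a b
  have h1' : (1 : ℝ) ≤ Mw w' a b := by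
    exact_mod_cast Mw_pos_all (Wn_dig hS w1') (by rw [(mem_Wn.mp w1').1]; exact hn) a b
  have a1 := Nat.lt_floor_add_one (Real.log (Mw w a b) * 2 ^ (i + 2))
  have a2 := Nat.floor_le (mul_nonneg (Real.log_nonneg h1') (by positivity : (0 : ℝ) ≤ 2 ^ (i + 2)))
  rw [e] at a1
  have a3 : Real.log (Mw w a b) * 2 ^ (i + 2) ≤ ((1/2) ^ (i + 2) + Real.log (Mw w' a b)) * 2 ^ (i + 2) := by
    have : ((1/2 : ℝ) ^ (i + 2)) * 2 ^ (i + 2) = 1 := by rw [← mul_pow]; norm_num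
    rw [add_mul, this]
    linarith
  have a4 := le_of_mul_le_mul_right a3 (by positivity)
  rw [← Real.exp_log (by linarith : (0 : ℝ) < Mw w' a b), ← Real.exp_add, ← Real.log_le_iff_le_exp (by linarith)]
  exact a4

lemma block {S : Finset ℕ} {A : ℕ} (hS : ∀ d ∈ S, 1 ≤ d ∧ d ≤ A) (n i : ℕ) (hn : 2 * (i + 1) ≤ n)
    (hZ : 4 * ((n * (A + 1) * 2 ^ (i + 2) + 1 : ℕ) : ℝ) ^ 4 ≤ Zn S n) :
    ∃ E : Ens, Ok A S (Real.exp ((1/2) ^ (i + 2))) E ∧ At 2 E ∧ 2 ^ (i + 1) ≤ E.c ∧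
      E.c ≤ ((A : ℝ) + 1) ^ n := by
  classical
  obtain ⟨T, hT, hT4, hrat⟩ := cell hS n i (by omega) hZ
  set Z := ∑ w ∈ T, (cont w : ℝ) ^ (-(5/3) : ℝ) with hZd
  have hne : T.Nonempty := by
    by_contra hc
    rw [Finset.not_nonempty_iff_eq_empty] at hc
    rw [hZd, hc] at hT4
    norm_num at hT4
  obtain ⟨w0, hw0⟩ := hne
  let E : Ens := ⟨T, inferInstance, ⟨w0, hw0⟩, fun w => (cont (w : List ℕ) : ℝ) ^ (-(5/3) : ℝ) / Z, fun w => w⟩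
  have hd : ∀ w : T, dig A (w : List ℕ) := fun w => Wn_dig hS (hT w.2)
  have hZ0 : 0 < Z := by linarith
  refine ⟨E, ⟨?_, ?_, ?_, ?_, ?_, ?_, ?_⟩, ?_, ?_, ?_⟩
  · intro w
    change 0 ≤ (cont (w : List ℕ) : ℝ) ^ (-(5/3) : ℝ) / Z
    positivity
  · change ∑ w : T, (cont (w : List ℕ) : ℝ) ^ (-(5/3) : ℝ) / Z = 1
    rw [← Finset.sum_div, Finset.sum_coe_sort T (fun w => (cont w : ℝ) ^ (-(5/3) : ℝ)), ← hZd]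
    exact div_self hZ0.ne'
  · intro a b h; exact Subtype.ext h
  · intro a b
    exact (mem_Wn.mp (hT a.2)).1.trans (mem_Wn.mp (hT b.2)).1.symm
  · exact hd
  · intro w; exact (mem_Wn.mp (hT w.2)).2
  · intro w w' a b; exact hrat _ w.2 _ w'.2 a b
  · intro w
    change (cont (w : List ℕ) : ℝ) ^ (-(5/3) : ℝ) / Z ≤ (2 * (cont (w : List ℕ) : ℝ)) ^ (-(5/3) : ℝ)
    have h1 : (1 : ℝ) ≤ cont (w : List ℕ) := by exact_mod_cast cont_pos (hd w)
    rw [div_le_iff₀ hZ0]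
    refine (two_mul_rpow (by linarith)).trans ?_
    rw [mul_comm]
    gcongr
  · change (2 : ℝ) ^ (i + 1) ≤ (cont w0 : ℝ)
    exact_mod_cast cont_ge_pow (i + 1) w0 (hd ⟨w0, hw0⟩) (by rw [(mem_Wn.mp (hT hw0)).1]; exact hn)
  · change (cont w0 : ℝ) ≤ _
    have := cont_le_pow w0 (hd ⟨w0, hw0⟩)
    rw [(mem_Wn.mp (hT hw0)).1] at this
    exact_mod_cast this

lemma exists_blk {S : Finset ℕ} {A : ℕ} (hS : ∀ d ∈ S, 1 ≤ d ∧ d ≤ A) (k : ℕ) (hk : 2048 ≤ Zn S k) :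
    ∃ C1 B, Blk A S C1 B := by
  have hk1 : 1 ≤ k := by
    by_contra hc
    have : k = 0 := by omega
    subst this
    simp [Zn, Wn, cont] at hk
  set V := 8 * k * (A + 1) with hV
  have hV8 : 8 ≤ V := by rw [hV]; nlinarith
  set m0 := 4 * V ^ 4 with hm0
  have hm02 : 2 ≤ m0 := by
    have : 1 ≤ V ^ 4 := Nat.one_le_pow _ _ (by omega)
    omega
  have hblk : ∀ i, ∃ E : Ens, Ok A S (Real.exp ((1/2) ^ (i + 2))) E ∧ At 2 E ∧ 2 ^ (i + 1) ≤ E.c ∧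
      E.c ≤ ((A : ℝ) + 1) ^ (k * (m0 + 2 * i)) := by
    intro i
    refine block hS (k * (m0 + 2 * i)) i ?_ ?_
    · nlinarith
    · refine le_trans ?_ (Zn_pow hS k hk (m0 + 2 * i))
      set m := m0 + 2 * i with hm
      have u0 : m ≤ 2 ^ m := Nat.lt_two_pow_self.le
      have u2 : 2 ^ i ≤ 2 ^ m := Nat.pow_le_pow_right (by norm_num) (by omega)
      have u1 : k * m * (A + 1) * 2 ^ (i + 2) + 1 ≤ V * 4 ^ m := by
        have e4 : 4 ^ m = 2 ^ m * 2 ^ m := by rw [← mul_pow]; norm_num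
        have v1 : m * 2 ^ i ≤ 4 ^ m := by rw [e4]; exact Nat.mul_le_mul u0 u2
        have v2 : 1 ≤ 4 ^ m := Nat.one_le_pow _ _ (by norm_num)
        calc k * m * (A + 1) * 2 ^ (i + 2) + 1 = 4 * k * (A + 1) * (m * 2 ^ i) + 1 := by ring
          _ ≤ 4 * k * (A + 1) * 4 ^ m + 1 * 4 ^ m := by
              rw [one_mul]
              exact Nat.add_le_add (Nat.mul_le_mul_left _ v1) v2
          _ = (4 * k * (A + 1) + 1) * 4 ^ m := by ring
          _ ≤ _ := by
              refine Nat.mul_le_mul_right _ ?_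
              rw [hV]; nlinarith
      have u3 : 4 * (k * m * (A + 1) * 2 ^ (i + 2) + 1) ^ 4 ≤ 512 ^ m := by
        calc 4 * (k * m * (A + 1) * 2 ^ (i + 2) + 1) ^ 4 ≤ 4 * (V * 4 ^ m) ^ 4 := by gcongr
          _ = m0 * 256 ^ m := by
              rw [mul_pow, ← pow_mul, mul_comm m 4, pow_mul, hm0]; norm_num; ring
          _ ≤ 2 ^ m * 256 ^ m := Nat.mul_le_mul_right _ ((by omega : m0 ≤ m).trans u0)
          _ = 512 ^ m := by rw [← mul_pow]; norm_num
      exact_mod_cast u3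
  choose B h1 h2 h3 h4 using hblk
  refine ⟨((A : ℝ) + 1) ^ (k * (m0 + 2)), B, h1, h2, h3, ?_⟩
  intro i
  refine (h4 i).trans ?_
  rw [← pow_mul]
  refine pow_le_pow_right₀ (by linarith [(Nat.cast_nonneg A : (0 : ℝ) ≤ A)]) ?_
  rw [mul_assoc]
  refine Nat.mul_le_mul_left _ ?_
  nlinarith

end Ens

lemma main_aux
    (A : Finset ℕ) (hpos : ∀ a ∈ A, 0 < a) (hcard : 2 ≤ A.card)
    (hδ : 1 - 1/6 < hdim A) :
    ∃ c : ℝ, 0 < c ∧ ∃ N₀ : ℕ, ∀ N : ℕ, N₀ ≤ N →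
      c * N ≤ ((DD A N).ncard : ℝ) := by
  have hS : ∀ d ∈ A, 1 ≤ d ∧ d ≤ A.sup id := fun d hd => ⟨hpos d hd, Finset.le_sup (f := id) hd⟩
  obtain ⟨k, hk⟩ := exists_Zn A hpos hδ 2048
  obtain ⟨C1, B, hB⟩ := Ens.exists_blk hS k hk
  obtain ⟨a, haA, ha⟩ : ∃ a ∈ A, 2 ≤ a := by
    by_contra hc
    push Not at hc
    have : A ⊆ {1} := fun x hx => by
      have h1 := hpos x hx
      have h2 := hc x hx
      simp; omega
    have := Finset.card_le_card this
    simp at this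
    omega
  exact hB.final ha (hS a haA).2 haA

theorem positive_proportion_of_dim_gt_five_sixths
    (A : Finset ℕ) (hpos : ∀ a ∈ A, 0 < a) (hcard : 2 ≤ A.card)
    (hδ : 1 - 1/6 < hdim A) :
    ∃ c : ℝ, 0 < c ∧ ∃ N₀ : ℕ, ∀ N : ℕ, N₀ ≤ N →
      c * N ≤ ((DD A N).ncard : ℝ) := by
  exact main_aux A hpos hcard hδ

end
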